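/- arXiv:1609.02301 — 2 statements merged into one kernel-verified Lean document; each statement's English description precedes it below -/
import Mathlib

section
/- The set { t : ℝ | ζ(1/2 + it) = 0 } is infinite; that is, the Riemann zeta function has infinitely many zeros on the critical line Re(s) = 1/2. -/
/-!
Write `θ(z) = ∑ₙ exp(-π n² z)`, and on the strip `|Im u| < π / 2` let
`g(u) = e^{u/4} (θ(e^u) - 1 - e^{-u/2})`. The Fourier transform of `g` on the real line is the
function `X(w) = 2 Λ(1/2 + 4πiw)`, where `Λ` is the completed zeta function; `X` is real, even and
continuous, and its zeros are those of `ζ` on the critical line. Shifting the contour,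
`e^{2πφw} X(w)` is the inverse Fourier transform of `x ↦ g(x + iφ)` for `|φ| < π / 2`.

Suppose `X` has no zero in `[T, ∞)`. It has constant sign there, and the Fourier transform of a
function of constant sign has its largest modulus at `0`. The part of `e^{2πφw} X(w)` over `w < T`
has `L¹` norm bounded uniformly in `0 ≤ φ < π / 2`, so `|g(x + iφ)| ≤ |g(iφ)| + C` with `C`
independent of `x` and `φ`. As `φ → π / 2`, the point `e^{iφ}` tends to `i` along the unit circle,
where `θ` is bounded because it vanishes at the cusp `i`; hence `g` is bounded on the half-strip
`0 ≤ Im u < π / 2`. But `θ` is unbounded near the cusp `2i`, which is the image under `exp` of the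
boundary point `log 2 + iπ/2`: a contradiction.
-/

section HardyTheorem

open Complex Filter Topology Set MeasureTheory FourierTransform

/-- The Jacobi theta function `θ(z) = ∑ₙ exp(-π n² z)`, in the variable of the right half-plane:
its functional equation relates `z` to `1 / z` and it is real on the positive axis. -/
noncomputable def halfPlaneTheta (z : ℂ) : ℂ := jacobiTheta (I * z)

section Theta

variable {z : ℂ}

lemma I_mul_im_pos (hz : 0 < z.re) : 0 < (I * z).im := by simpa using hz

lemma differentiableAt_halfPlaneTheta (hz : 0 < z.re) : DifferentiableAt ℂ halfPlaneTheta z :=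
  (differentiableAt_jacobiTheta (I_mul_im_pos hz)).comp z (differentiableAt_id.const_mul I)

lemma halfPlaneTheta_one_div (hz : 0 < z.re) :
    halfPlaneTheta (1 / z) = z ^ (1 / 2 : ℂ) * halfPlaneTheta z := by
  have h := jacobiTheta_S_smul ⟨I * z, I_mul_im_pos hz⟩
  rw [UpperHalfPlane.modular_S_smul] at h
  have hz0 := ne_zero_of_re_pos hz
  unfold halfPlaneTheta
  convert h using 2
  · field_simp
    simp
  · congr 1
    simp [← mul_assoc]

lemma halfPlaneTheta_add_two_mul_I (z : ℂ) :
    halfPlaneTheta (z + 2 * I) = halfPlaneTheta z := by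
  have h := jacobiTheta_two_add (I * z - 2)
  rw [add_sub_cancel] at h
  rw [halfPlaneTheta, halfPlaneTheta, h]
  congr 1
  linear_combination 2 * I_sq

lemma norm_halfPlaneTheta_sub_one_le (hz : 0 < z.re) : ‖halfPlaneTheta z - 1‖ ≤ 1 / z.re := by
  set t := Real.pi * z.re with ht
  have ht0 : 0 < t := mul_pos Real.pi_pos hz
  have hexp : t ≤ Real.exp t - 1 := by linarith [Real.add_one_le_exp t]
  calc ‖halfPlaneTheta z - 1‖
      ≤ 2 / (1 - Real.exp (-t)) * Real.exp (-t) := by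
        simpa [halfPlaneTheta, ht] using norm_jacobiTheta_sub_one_le (I_mul_im_pos hz)
    _ = 2 / (Real.exp t - 1) := by
        have : Real.exp t - 1 ≠ 0 := by linarith
        rw [Real.exp_neg]
        field_simp
    _ ≤ 2 / t := by gcongr
    _ ≤ 1 / z.re := by
        rw [ht, div_le_div_iff₀ ht0 hz]
        nlinarith [Real.pi_gt_three]

lemma jacobiTheta_add_jacobiTheta_add_one {τ : ℂ} (hτ : 0 < τ.im) :
    jacobiTheta τ + jacobiTheta (τ + 1) = 2 * jacobiTheta (4 * τ) := by
  have hasSum {τ : ℂ} (hτ : 0 < τ.im) :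
      HasSum (fun n : ℤ => cexp (Real.pi * I * (n : ℂ) ^ 2 * τ)) (jacobiTheta τ) := by
    simpa [jacobiTheta₂_term, ← jacobiTheta_eq_jacobiTheta₂] using hasSum_jacobiTheta₂_term 0 hτ
  have hshift (n : ℤ) : cexp (Real.pi * I * (n : ℂ) ^ 2 * (τ + 1)) =
      (-1) ^ (n ^ 2) * cexp (Real.pi * I * (n : ℂ) ^ 2 * τ) := by
    rw [← exp_pi_mul_I, ← exp_int_mul, ← Complex.exp_add]
    congr 1
    push_cast
    ring
  have hsum := (hasSum hτ).add (hasSum (τ := τ + 1) (by simpa using hτ))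
  have heven (n : ℤ) : 2 * cexp (Real.pi * I * (n : ℂ) ^ 2 * (4 * τ)) =
      cexp (Real.pi * I * ((2 * n : ℤ) : ℂ) ^ 2 * τ) +
        cexp (Real.pi * I * ((2 * n : ℤ) : ℂ) ^ 2 * (τ + 1)) := by
    rw [hshift, ((even_two_mul n).pow_of_ne_zero two_ne_zero).neg_one_zpow, one_mul, ← two_mul]
    push_cast
    ring_nf
  have hodd (n : ℤ) (hn : n ∉ range (2 * · : ℤ → ℤ)) :
      cexp (Real.pi * I * (n : ℂ) ^ 2 * τ) + cexp (Real.pi * I * (n : ℂ) ^ 2 * (τ + 1)) = 0 := by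
    have : Odd n := by
      simpa [← Int.not_even_iff_odd, even_iff_exists_two_mul, eq_comm] using hn
    rw [hshift, this.pow.neg_one_zpow]
    ring
  refine ((mul_right_injective₀ (two_ne_zero' ℤ)).hasSum_iff hodd |>.mpr hsum).unique ?_
  simpa only [Function.comp_def, ← heven] using (hasSum (τ := 4 * τ) (by simpa using hτ)).mul_left 2

lemma halfPlaneTheta_I_add (hz : 0 < z.re) :
    halfPlaneTheta (I + z) = 2 * halfPlaneTheta (4 * z) - halfPlaneTheta z := by
  have hdup := jacobiTheta_add_jacobiTheta_add_one (I_mul_im_pos hz)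
  have hperiod := jacobiTheta_two_add (I * z - 1)
  have hI : I * (I + z) = I * z - 1 := by linear_combination I_sq
  have h2 : 2 + (I * z - 1) = I * z + 1 := by ring
  have h4 : I * (4 * z) = 4 * (I * z) := by ring
  rw [h2] at hperiod
  rw [halfPlaneTheta, halfPlaneTheta, halfPlaneTheta, hI, h4, ← hperiod, eq_sub_iff_add_eq', hdup]

lemma sq_mul_cpow_one_half {r : ℝ} (hr : 0 < r) (hz : z ≠ 0) :
    ((r ^ 2 : ℝ) * z) ^ (1 / 2 : ℂ) = r * z ^ (1 / 2 : ℂ) := by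
  have hr0 : ((r ^ 2 : ℝ) : ℂ) ≠ 0 := ofReal_ne_zero.mpr (pow_ne_zero 2 hr.ne')
  have hlog : (2 * Real.log r + log z) * (1 / 2) = Real.log r + log z * (1 / 2) := by ring
  rw [cpow_def_of_ne_zero (mul_ne_zero hr0 hz), cpow_def_of_ne_zero hz,
    log_ofReal_mul (pow_pos hr 2) hz, Real.log_pow, Nat.cast_ofNat, ofReal_mul, ofReal_ofNat, hlog,
    Complex.exp_add, ← ofReal_exp, Real.exp_log hr]

lemma halfPlaneTheta_I_add_one_div (hz : 0 < z.re) :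
    halfPlaneTheta (I + 1 / z) =
      z ^ (1 / 2 : ℂ) * (halfPlaneTheta (z / 4) - halfPlaneTheta z) := by
  have hz0 := ne_zero_of_re_pos hz
  have hroot : (z / 4) ^ (1 / 2 : ℂ) = 1 / 2 * z ^ (1 / 2 : ℂ) := by
    have h := sq_mul_cpow_one_half (r := 1 / 2) (by norm_num) hz0
    rw [show (((1 / 2) ^ 2 : ℝ) : ℂ) * z = z / 4 by push_cast; ring] at h
    rw [h]
    push_cast
    rfl
  have hfour := halfPlaneTheta_one_div (z := z / 4) (by simpa using hz)
  rw [one_div_div, hroot] at hfour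
  have hinv : 0 < (1 / z).re := by
    rw [one_div, inv_re]
    exact div_pos hz (normSq_pos.mpr hz0)
  rw [halfPlaneTheta_I_add hinv, mul_one_div, hfour, halfPlaneTheta_one_div hz]
  ring

lemma norm_cpow_one_half (z : ℂ) : ‖z ^ (1 / 2 : ℂ)‖ = √‖z‖ := by
  rw [Real.sqrt_eq_rpow, ← norm_cpow_real]
  norm_num

lemma norm_halfPlaneTheta_I_add_one_div_le (hz : 0 < z.re) :
    ‖halfPlaneTheta (I + 1 / z)‖ ≤ √‖z‖ * (5 / z.re) := by
  rw [halfPlaneTheta_I_add_one_div hz, norm_mul, norm_cpow_one_half]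
  gcongr
  calc ‖halfPlaneTheta (z / 4) - halfPlaneTheta z‖
      = ‖(halfPlaneTheta (z / 4) - 1) - (halfPlaneTheta z - 1)‖ := by rw [sub_sub_sub_cancel_right]
    _ ≤ 1 / (z / 4).re + 1 / z.re := (norm_sub_le _ _).trans (add_le_add
        (norm_halfPlaneTheta_sub_one_le (by simpa using hz)) (norm_halfPlaneTheta_sub_one_le hz))
    _ = 5 / z.re := by
        rw [div_ofNat_re]
        field_simp
        norm_num

-- The Möbius map `z ↦ (z - i)⁻¹` sends the unit circle, which passes through the cusp `i`, to the
-- line `Im = 1 / 2`. Its inverse is the substitution `z = i + 1 / v`, in which the constant terms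
-- of `halfPlaneTheta_I_add_one_div` cancel.
lemma inv_sub_I_of_norm_eq_one (hz : 0 < z.re) (hz_im : 0 ≤ z.im) (hz_norm : ‖z‖ = 1) :
    1 / 2 ≤ ((z - I)⁻¹).re ∧ ((z - I)⁻¹).im = 1 / 2 := by
  have hcircle : z.re ^ 2 + z.im ^ 2 = 1 := by
    simpa [hz_norm, normSq_apply, sq] using normSq_eq_norm_sq z
  have him_lt : 0 < 1 - z.im := by nlinarith
  have hre_ge : 1 - z.im ≤ z.re := by nlinarith
  have hnormSq : normSq (z - I) = 2 * (1 - z.im) := by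
    simp only [normSq_apply, sub_re, I_re, sub_im, I_im]
    linear_combination hcircle
  simp only [inv_re, inv_im, hnormSq, sub_re, I_re, sub_im, I_im]
  constructor
  · rw [div_le_div_iff₀ two_pos (by positivity)]
    linarith
  · field_simp
    ring

lemma norm_halfPlaneTheta_le_of_norm_eq_one (hz : 0 < z.re) (hz_im : 0 ≤ z.im) (hz_norm : ‖z‖ = 1) :
    ‖halfPlaneTheta z‖ ≤ 20 := by
  obtain ⟨hre, him⟩ := inv_sub_I_of_norm_eq_one hz hz_im hz_norm
  set v := (z - I)⁻¹ with hv
  have hre_pos : 0 < v.re := by linarith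
  have hsqrt : √‖v‖ ≤ 4 * v.re := by
    have hnorm := norm_le_abs_re_add_abs_im v
    rw [him, abs_of_pos hre_pos, abs_of_pos one_half_pos] at hnorm
    rw [Real.sqrt_le_left (by positivity)]
    nlinarith
  calc ‖halfPlaneTheta z‖
      = ‖halfPlaneTheta (I + 1 / v)‖ := by rw [hv, one_div, inv_inv, add_sub_cancel]
    _ ≤ √‖v‖ * (5 / v.re) := norm_halfPlaneTheta_I_add_one_div_le hre_pos
    _ ≤ 4 * v.re * (5 / v.re) := by gcongr
    _ = 20 := by
        field_simp
        norm_num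

lemma tendsto_norm_halfPlaneTheta_add_two_mul_I :
    Tendsto (fun ε : ℝ => ‖halfPlaneTheta (ε + 2 * I)‖) (𝓝[>] 0) atTop := by
  have hcusp : Tendsto (fun y : ℝ => √y * (1 / 2)) atTop atTop :=
    Real.tendsto_sqrt_atTop.atTop_mul_const (by norm_num)
  refine tendsto_atTop_mono' _ ?_ (hcusp.comp tendsto_inv_nhdsGT_zero)
  filter_upwards [Ioo_mem_nhdsGT (show (0 : ℝ) < 1 / 2 by norm_num)] with ε ⟨hε, hε_le⟩
  have hre : 0 < ((ε⁻¹ : ℝ) : ℂ).re := by simpa using hε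
  have hinv : (ε : ℂ) = 1 / (ε⁻¹ : ℝ) := by simp
  have hlower : 1 / 2 ≤ ‖halfPlaneTheta (ε⁻¹ : ℝ)‖ := by
    have hone := norm_halfPlaneTheta_sub_one_le hre
    rw [ofReal_re, one_div, inv_inv] at hone
    have := norm_sub_norm_le (1 : ℂ) (halfPlaneTheta (ε⁻¹ : ℝ))
    rw [norm_one, norm_sub_rev] at this
    linarith
  rw [halfPlaneTheta_add_two_mul_I, hinv, halfPlaneTheta_one_div hre, norm_mul, norm_cpow_one_half,
    norm_real, Real.norm_of_nonneg (inv_pos.mpr hε).le]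
  exact mul_le_mul_of_nonneg_left hlower (Real.sqrt_nonneg _)

end Theta

section Kernel

variable {u : ℂ}

/-- The kernel `e^{u/4} (θ(e^u) - 1 - e^{-u/2})` on the strip `|Im u| < π / 2`: the theta function
stripped of its growth at the cusps `∞` and `0`, and made even. -/
noncomputable def thetaKernel (u : ℂ) : ℂ :=
  cexp (u / 4) * halfPlaneTheta (cexp u) - cexp (u / 4) - cexp (-u / 4)

lemma exp_re_pos (hu : |u.im| < Real.pi / 2) : 0 < (cexp u).re := by
  rw [exp_re]
  exact mul_pos (Real.exp_pos _) (Real.cos_pos_of_mem_Ioo (abs_lt.mp hu))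

lemma differentiableAt_thetaKernel (hu : |u.im| < Real.pi / 2) :
    DifferentiableAt ℂ thetaKernel u := by
  have hθ : DifferentiableAt ℂ (fun u => halfPlaneTheta (cexp u)) u :=
    (differentiableAt_halfPlaneTheta (exp_re_pos hu)).comp u differentiableAt_exp
  unfold thetaKernel
  fun_prop

lemma thetaKernel_neg (hu : |u.im| < Real.pi / 2) : thetaKernel (-u) = thetaKernel u := by
  have hlog : log (cexp u) = u := by
    have := abs_lt.mp hu
    exact log_exp (by linarith) (by linarith)
  have hθ : halfPlaneTheta (cexp (-u)) = cexp (u / 2) * halfPlaneTheta (cexp u) := by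
    rw [Complex.exp_neg, inv_eq_one_div, halfPlaneTheta_one_div (exp_re_pos hu),
      cpow_def_of_ne_zero (Complex.exp_ne_zero u), hlog, mul_one_div]
  have hexp : cexp (-u / 4) * cexp (u / 2) = cexp (u / 4) := by
    rw [← Complex.exp_add]
    congr 1
    ring
  rw [thetaKernel, thetaKernel, hθ, ← mul_assoc, hexp, neg_neg]
  ring

lemma norm_thetaKernel_le (hu : |u.im| < Real.pi / 2) :
    ‖thetaKernel u‖ ≤ (1 + 1 / Real.cos u.im) * Real.exp (-|u.re| / 4) := by
  wlog hre : 0 ≤ u.re generalizing u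
  · simpa [thetaKernel_neg hu] using this (u := -u) (by simpa using hu) (by simp; linarith)
  have hcos : 0 < Real.cos u.im := Real.cos_pos_of_mem_Ioo (abs_lt.mp hu)
  have hnorm : ‖cexp (u / 4)‖ = Real.exp (u.re / 4) := by simp [norm_exp]
  have hnorm_neg : ‖cexp (-u / 4)‖ = Real.exp (-u.re / 4) := by simp [norm_exp]
  calc ‖thetaKernel u‖
      = ‖cexp (u / 4) * (halfPlaneTheta (cexp u) - 1) - cexp (-u / 4)‖ := by
        rw [thetaKernel, mul_sub_one]
    _ ≤ Real.exp (u.re / 4) * (1 / (cexp u).re) + Real.exp (-u.re / 4) := by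
        rw [← hnorm, ← hnorm_neg]
        refine (norm_sub_le _ _).trans ?_
        rw [norm_mul]
        gcongr
        exact norm_halfPlaneTheta_sub_one_le (exp_re_pos hu)
    _ = 1 / Real.cos u.im * Real.exp (u.re / 4 - u.re) + Real.exp (-u.re / 4) := by
        rw [exp_re, Real.exp_sub]
        field_simp
    _ ≤ 1 / Real.cos u.im * Real.exp (-u.re / 4) + Real.exp (-u.re / 4) := by
        gcongr
        linarith
    _ = (1 + 1 / Real.cos u.im) * Real.exp (-|u.re| / 4) := by
        rw [abs_of_nonneg hre]
        ring

end Kernel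

section Mellin

variable {E : Type*} [NormedAddCommGroup E] [NormedSpace ℂ E]

lemma hasMellin_smul_const [CompleteSpace E] {f : ℝ → ℂ} {s a : ℂ} (h : HasMellin f s a) (v : E) :
    HasMellin (fun t => f t • v) s (a • v) := by
  refine ⟨?_, ?_⟩
  · rw [MellinConvergent]
    simp_rw [← smul_assoc]
    exact Integrable.smul_const h.1 v
  · simp_rw [mellin, ← smul_assoc, integral_smul_const]
    rw [← mellin, h.2]

lemma hasMellin_congr_ae {f g : ℝ → E} {s : ℂ} {a : E} (h : HasMellin f s a)
    (hfg : ∀ᵐ t ∂volume.restrict (Ioi 0), f t = g t) : HasMellin g s a := by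
  have hsmul : (fun t : ℝ => (t : ℂ) ^ (s - 1) • f t) =ᵐ[volume.restrict (Ioi 0)]
      fun t => (t : ℂ) ^ (s - 1) • g t := by
    filter_upwards [hfg] with t ht
    rw [ht]
  exact ⟨Integrable.congr h.1 hsmul, by rw [mellin, ← integral_congr_ae hsmul, ← h.2, mellin]⟩

lemma hasMellin_cpow_Ioi (a : ℂ) {s : ℂ} (hs : s.re + a.re < 0) :
    HasMellin ((Ioi 1).indicator fun t : ℝ => (t : ℂ) ^ a) s (-1 / (s + a)) := by
  have hexp : (s - 1 + a).re < -1 := by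
    simp only [add_re, sub_re, one_re]
    linarith
  have hsub : Ioi (1 : ℝ) ⊆ Ioi 0 := Ioi_subset_Ioi zero_le_one
  have hpow : EqOn (fun t : ℝ => (t : ℂ) ^ (s - 1) * (t : ℂ) ^ a)
      (fun t => (t : ℂ) ^ (s - 1 + a)) (Ioi 1) := fun t ht =>
    (cpow_add _ _ (ofReal_ne_zero.mpr (zero_lt_one.trans ht).ne')).symm
  simp_rw [HasMellin, mellin, MellinConvergent, ← indicator_smul, IntegrableOn,
    integrable_indicator_iff measurableSet_Ioi, integral_indicator measurableSet_Ioi, smul_eq_mul,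
    IntegrableOn, Measure.restrict_restrict_of_subset hsub]
  constructor
  · exact (integrableOn_congr_fun hpow measurableSet_Ioi).mpr
      (integrableOn_Ioi_cpow_of_lt hexp one_pos)
  · rw [setIntegral_congr_fun measurableSet_Ioi hpow, integral_Ioi_cpow_of_lt hexp one_pos,
      ofReal_one, one_cpow]
    congr 1
    ring

lemma f_modif_eq_sub_sub {P : WeakFEPair E} {t : ℝ} (ht : 0 < t) (ht1 : t ≠ 1) :
    P.f_modif t - (Ioc 0 1).indicator (fun _ => (1 : ℂ)) t • P.f₀ -
        (Ioi 1).indicator (fun t : ℝ => (t : ℂ) ^ (-P.k : ℂ)) t • P.ε • P.g₀ =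
      P.f t - P.f₀ - (t : ℂ) ^ (-P.k : ℂ) • P.ε • P.g₀ := by
  rw [WeakFEPair.f_modif, Pi.add_apply]
  rcases ht1.lt_or_gt with hlt | hgt
  · rw [indicator_of_notMem (notMem_Ioi.mpr hlt.le), indicator_of_mem (mem_Ioo.mpr ⟨ht, hlt⟩),
      indicator_of_mem (mem_Ioc.mpr ⟨ht, hlt.le⟩), indicator_of_notMem (notMem_Ioi.mpr hlt.le),
      ofReal_cpow ht.le, ofReal_neg]
    module
  · rw [indicator_of_mem (mem_Ioi.mpr hgt), indicator_of_notMem (notMem_Ioo_of_ge hgt.le),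
      indicator_of_notMem (notMem_Ioc_of_gt hgt), indicator_of_mem (mem_Ioi.mpr hgt)]
    module

lemma hasMellin_sub_f₀_sub_g₀ [CompleteSpace E] (P : WeakFEPair E) {s : ℂ} (hs : 0 < s.re)
    (hsk : s.re < P.k) :
    HasMellin (fun t => P.f t - P.f₀ - (t : ℂ) ^ (-P.k : ℂ) • P.ε • P.g₀) s (P.Λ s) := by
  have hmodif : HasMellin P.f_modif s (P.Λ₀ s) :=
    ⟨(P.isStrongFEPair_toStrongFEPair.hasMellin s).1, rfl⟩
  have hzero := hasMellin_smul_const (hasMellin_one_Ioc hs) P.f₀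
  have htop := hasMellin_smul_const
    (hasMellin_cpow_Ioi (-P.k : ℂ) (s := s) (by simpa using hsk)) (P.ε • P.g₀)
  have hsub := hasMellin_sub hmodif.1 hzero.1
  have hall := hasMellin_sub hsub.1 htop.1
  rw [hsub.2, hmodif.2, hzero.2, htop.2] at hall
  have hΛ : P.Λ s = P.Λ₀ s - (1 / s) • P.f₀ - (-1 / (s + -P.k)) • P.ε • P.g₀ := by
    rw [WeakFEPair.Λ, ← sub_eq_add_neg, ← neg_sub (P.k : ℂ) s, neg_div_neg_eq, smul_smul,
      one_div_mul_eq_div]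
  rw [hΛ]
  refine hasMellin_congr_ae hall ?_
  filter_upwards [ae_restrict_mem measurableSet_Ioi, ae_restrict_of_ae (Measure.ae_ne volume 1)]
    with t ht ht1 using f_modif_eq_sub_sub ht ht1

end Mellin

section Fourier

lemma completedRiemannZeta_two_mul (s : ℂ) :
    completedRiemannZeta (2 * s) = (HurwitzZeta.hurwitzEvenFEPair 0).Λ s / 2 := by
  rw [completedRiemannZeta, HurwitzZeta.completedHurwitzZetaEven,
    mul_div_cancel_left₀ _ two_ne_zero]

lemma hasMellin_halfPlaneTheta {s : ℂ} (hs : 0 < s.re) (hs' : s.re < 1 / 2) :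
    HasMellin (fun t : ℝ => halfPlaneTheta t - 1 - (t : ℂ) ^ (-(1 / 2) : ℂ)) s
      (2 * completedRiemannZeta (2 * s)) := by
  have h := hasMellin_sub_f₀_sub_g₀ (HurwitzZeta.hurwitzEvenFEPair 0) hs hs'
  rw [completedRiemannZeta_two_mul, mul_div_cancel₀ _ two_ne_zero]
  refine hasMellin_congr_ae h (ae_of_all _ fun t => ?_)
  have hkernel : (HurwitzZeta.evenKernel 0 t : ℂ) = halfPlaneTheta t := by
    simpa [halfPlaneTheta, jacobiTheta_eq_jacobiTheta₂] using HurwitzZeta.evenKernel_def 0 t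
  simp [HurwitzZeta.hurwitzEvenFEPair, hkernel]

lemma fourier_thetaKernel (w : ℝ) :
    𝓕 (fun x : ℝ => thetaKernel x) w = 2 * completedRiemannZeta (1 / 2 + 4 * Real.pi * w * I) := by
  set s : ℂ := 1 / 4 + 2 * Real.pi * w * I with hs
  have hre : s.re = 1 / 4 := by simp [hs]
  have him : s.im / (2 * Real.pi) = w := by simp [hs]
  have htwo : 2 * s = 1 / 2 + 4 * Real.pi * w * I := by
    rw [hs]
    ring
  have hkernel (x : ℝ) : Real.exp (-s.re * x) • (halfPlaneTheta (Real.exp (-x)) - 1 -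
      (Real.exp (-x) : ℂ) ^ (-(1 / 2) : ℂ)) = thetaKernel x := by
    have hcusp : (Real.exp (-x) : ℂ) ^ (-(1 / 2) : ℂ) = cexp (x / 2) := by
      rw [cpow_def_of_ne_zero (ofReal_ne_zero.mpr (Real.exp_ne_zero _)),
        ← ofReal_log (Real.exp_pos _).le, Real.log_exp]
      congr 1
      push_cast
      ring
    have hexp : cexp (-x / 4) * cexp (x / 2) = cexp (x / 4) := by
      rw [← Complex.exp_add]
      congr 1
      ring
    have hfactor : (Real.exp (-(1 / 4) * x) : ℂ) = cexp (-x / 4) := by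
      push_cast
      ring_nf
    rw [← thetaKernel_neg (by simp [Real.pi_pos]), thetaKernel, hcusp, hre, real_smul, hfactor,
      mul_sub, mul_sub, hexp, neg_neg, mul_one, ofReal_exp, ofReal_neg]
  have h := (hasMellin_halfPlaneTheta (s := s) (by norm_num [hre]) (by norm_num [hre])).2
  rw [mellin_eq_fourier, htwo, him] at h
  simpa only [hkernel] using h

end Fourier

section ContourShift

lemma abs_le_abs_of_mem_uIcc_zero {x y : ℝ} (hx : x ∈ uIcc 0 y) : |x| ≤ |y| := by
  simpa using abs_sub_left_of_mem_uIcc hx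

lemma integrable_exp_neg_mul_abs {c : ℝ} (hc : 0 < c) :
    Integrable fun x : ℝ => Real.exp (-(c * |x|)) := by
  rw [← integrableOn_univ, ← Iic_union_Ioi (a := 0)]
  refine IntegrableOn.union ?_ ?_
  · refine (integrableOn_exp_mul_Iic hc 0).congr_fun (fun x hx => ?_) measurableSet_Iic
    simp only [abs_of_nonpos (mem_Iic.mp hx), mul_neg, neg_neg]
  · refine (integrableOn_exp_mul_Ioi (neg_neg_of_pos hc) 0).congr_fun (fun x hx => ?_)
      measurableSet_Ioi
    simp only [abs_of_pos (mem_Ioi.mp hx), neg_mul]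

lemma tendsto_exp_neg_mul_abs_cocompact {c : ℝ} (hc : 0 < c) :
    Tendsto (fun x : ℝ => Real.exp (-(c * |x|))) (cocompact ℝ) (𝓝 0) :=
  Real.tendsto_exp_neg_atTop_nhds_zero.comp (tendsto_norm_cocompact_atTop.const_mul_atTop hc)

lemma integrable_exp_mul_of_le {f : ℝ → ℝ} {a b C : ℝ} (hf : AEStronglyMeasurable f)
    (hab : |a| < b) (hpos : ∀ x, Real.exp (b * x) * |f x| ≤ C)
    (hneg : ∀ x, Real.exp (-b * x) * |f x| ≤ C) :
    Integrable fun x => Real.exp (a * x) * f x := by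
  refine ((integrable_exp_neg_mul_abs (sub_pos.mpr hab)).const_mul C).mono'
    ((by fun_prop : Continuous fun x => Real.exp (a * x)).aestronglyMeasurable.mul hf)
    (ae_of_all _ fun x => ?_)
  have hC : Real.exp (b * |x|) * |f x| ≤ C := by
    rcases abs_cases x with ⟨hx, -⟩ | ⟨hx, -⟩
    · simpa only [hx] using hpos x
    · simpa only [hx, mul_neg, neg_mul] using hneg x
  calc ‖Real.exp (a * x) * f x‖
      ≤ Real.exp (|a| * |x|) * |f x| := by
        rw [norm_mul, Real.norm_eq_abs, Real.abs_exp, ← abs_mul, Real.norm_eq_abs]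
        gcongr
        exact le_abs_self _
    _ = Real.exp (b * |x|) * |f x| * Real.exp (-((b - |a|) * |x|)) := by
        rw [mul_right_comm, ← Real.exp_add]
        ring_nf
    _ ≤ C * Real.exp (-((b - |a|) * |x|)) := by gcongr

variable {E : Type*} [NormedAddCommGroup E] [NormedSpace ℂ E] {f : ℂ → E} {φ : ℝ} {B : ℝ → ℝ}

lemma tendsto_intervalIntegral_vertical_zero {l : Filter ℝ}
    (hfB : ∀ z : ℂ, z.im ∈ uIcc 0 φ → ‖f z‖ ≤ B z.re) (hB : Tendsto B l (𝓝 0)) :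
    Tendsto (fun R : ℝ => ∫ y in 0..φ, f (R + y * I)) l (𝓝 0) := by
  refine squeeze_zero_norm (fun R => ?_) (by simpa using hB.mul_const |φ|)
  simpa using intervalIntegral.norm_integral_le_of_norm_le_const (a := 0) (b := φ)
    fun y hy => by simpa using hfB (R + y * I) (by simpa using uIoc_subset_uIcc hy)

lemma integral_comp_add_mul_I (hf : ∀ z : ℂ, z.im ∈ uIcc 0 φ → DifferentiableAt ℂ f z)
    (hfB : ∀ z : ℂ, z.im ∈ uIcc 0 φ → ‖f z‖ ≤ B z.re) (hB : Integrable B)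
    (hB0 : Tendsto B (cocompact ℝ) (𝓝 0)) :
    ∫ x : ℝ, f (x + φ * I) = ∫ x : ℝ, f x := by
  have horizontal {y : ℝ} (hy : y ∈ uIcc 0 φ) :
      Tendsto (fun R : ℝ => ∫ x in -R..R, f (x + y * I)) atTop (𝓝 (∫ x : ℝ, f (x + y * I))) := by
    refine intervalIntegral_tendsto_integral (hB.mono' ?_ ?_) tendsto_neg_atTop_atBot tendsto_id
    · have hline : Continuous fun x : ℝ => (x + y * I : ℂ) := by fun_prop
      refine (continuous_iff_continuousAt.mpr fun x => ?_).aestronglyMeasurable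
      exact ContinuousAt.comp' (hf _ (by simpa using hy)).continuousAt hline.continuousAt
    · exact ae_of_all _ fun x => by simpa using hfB (x + y * I) (by simpa using hy)
  rw [cocompact_eq_atBot_atTop, tendsto_sup] at hB0
  have hright := tendsto_intervalIntegral_vertical_zero hfB hB0.2
  have hleft := (tendsto_intervalIntegral_vertical_zero hfB hB0.1).comp tendsto_neg_atTop_atBot
  have hrect (R : ℝ) : (∫ x in -R..R, f (x + (0 : ℝ) * I)) - (∫ x in -R..R, f (x + φ * I)) +
      I • (∫ y in 0..φ, f (R + y * I)) - I • (∫ y in 0..φ, f ((-R : ℝ) + y * I)) = 0 := by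
    simpa using integral_boundary_rect_eq_zero_of_differentiableOn f (-R) (R + φ * I)
      fun z hz => (hf z (by simpa using hz.2)).differentiableWithinAt
  have hlimit := (((horizontal left_mem_uIcc).sub (horizontal right_mem_uIcc)).add
    (hright.const_smul I)).sub (hleft.const_smul I)
  have hzero := tendsto_nhds_unique (hlimit.congr hrect) tendsto_const_nhds
  exact (sub_eq_zero.mp (by simpa using hzero)).symm

lemma fourierInv_comp_add_mul_I (hf : ∀ z : ℂ, z.im ∈ uIcc 0 φ → DifferentiableAt ℂ f z)
    (hfB : ∀ z : ℂ, z.im ∈ uIcc 0 φ → ‖f z‖ ≤ B z.re) (hB : Integrable B)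
    (hB0 : Tendsto B (cocompact ℝ) (𝓝 0)) (w : ℝ) :
    𝓕⁻ (fun x : ℝ => f (x + φ * I)) w =
      Real.exp (2 * Real.pi * φ * w) • 𝓕⁻ (fun x : ℝ => f x) w := by
  set M := Real.exp (2 * Real.pi * |w| * |φ|) with hM
  have hnorm (z : ℂ) (hz : z.im ∈ uIcc 0 φ) :
      ‖cexp (2 * Real.pi * w * z * I) • f z‖ ≤ M * B z.re := by
    rw [norm_smul, norm_exp]
    refine mul_le_mul ?_ (hfB z hz) (norm_nonneg _) (Real.exp_pos _).le
    have him : |z.im| ≤ |φ| := abs_le_abs_of_mem_uIcc_zero hz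
    have hre : (2 * Real.pi * w * z * I).re = -(2 * Real.pi * (w * z.im)) := by
      simp [mul_assoc]
    rw [hM, Real.exp_le_exp, hre, mul_assoc (2 * Real.pi), ← mul_neg]
    gcongr
    exact (neg_le_abs _).trans (by rw [abs_mul]; gcongr)
  have hshift := integral_comp_add_mul_I (f := fun z => cexp (2 * Real.pi * w * z * I) • f z)
    (fun z hz => DifferentiableAt.fun_smul (by fun_prop) (hf z hz)) hnorm (hB.const_mul M)
    (by simpa using hB0.const_mul M)
  rw [Real.fourierInv_eq', Real.fourierInv_eq']
  have hsplit (x : ℝ) : cexp (2 * Real.pi * w * (x + φ * I) * I) • f (x + φ * I) =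
      Real.exp (-(2 * Real.pi * φ * w)) • cexp (2 * Real.pi * w * x * I) • f (x + φ * I) := by
    rw [← coe_smul, smul_smul, ofReal_exp, ← Complex.exp_add]
    congr 2
    push_cast
    linear_combination (2 * Real.pi * w * φ) * I_sq
  simp_rw [hsplit, integral_smul, Real.exp_neg] at hshift
  rw [inv_smul_eq_iff₀ (Real.exp_pos _).ne'] at hshift
  simpa [mul_assoc] using hshift

end ContourShift

section Positivity

variable {V : Type*} [NormedAddCommGroup V] [InnerProductSpace ℝ V] [MeasurableSpace V]
  [BorelSpace V] [FiniteDimensional ℝ V] {h : V → ℝ} {K : Set V}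

lemma norm_fourier_le_of_nonneg_compl (hh : Integrable h) (hK : MeasurableSet K)
    (hpos : ∀ w ∉ K, 0 ≤ h w) (x : V) :
    ‖𝓕 (fun w => (h w : ℂ)) x‖ ≤ ‖𝓕 (fun w => (h w : ℂ)) 0‖ + 2 * ∫ w in K, |h w| := by
  have hzero : ∫ w, h w ≤ ‖𝓕 (fun w => (h w : ℂ)) 0‖ := by
    simpa [Real.fourier_eq', integral_complex_ofReal] using le_abs_self (∫ w, h w)
  have habs : ∫ w in Kᶜ, |h w| = ∫ w in Kᶜ, h w :=
    setIntegral_congr_fun hK.compl fun w hw => abs_of_nonneg (hpos w hw)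
  have hneg : -∫ w in K, h w ≤ ∫ w in K, |h w| :=
    (neg_le_abs _).trans abs_integral_le_integral_abs
  calc ‖𝓕 (fun w => (h w : ℂ)) x‖
      ≤ ∫ w, |h w| := by
        refine (VectorFourier.norm_fourierIntegral_le_integral_norm 𝐞 volume
          (innerₗ V) _ x).trans_eq ?_
        simp only [norm_real, Real.norm_eq_abs]
    _ = (∫ w, h w) + ((∫ w in K, |h w|) - ∫ w in K, h w) := by
        rw [← integral_add_compl hK hh.abs, ← integral_add_compl hK hh, habs]
        ring
    _ ≤ ‖𝓕 (fun w => (h w : ℂ)) 0‖ + 2 * ∫ w in K, |h w| := by linarith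

lemma norm_fourier_le_of_sign_compl (hh : Integrable h) (hK : MeasurableSet K)
    (hsign : (∀ w ∉ K, 0 ≤ h w) ∨ ∀ w ∉ K, h w ≤ 0) (x : V) :
    ‖𝓕 (fun w => (h w : ℂ)) x‖ ≤ ‖𝓕 (fun w => (h w : ℂ)) 0‖ + 2 * ∫ w in K, |h w| := by
  rcases hsign with hpos | hneg
  · exact norm_fourier_le_of_nonneg_compl hh hK hpos x
  · have hminus (y : V) : 𝓕 (fun w => ((-h w : ℝ) : ℂ)) y = -𝓕 (fun w => (h w : ℂ)) y := by
      simp [Real.fourier_eq', integral_neg]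
    simpa only [Pi.neg_apply, hminus, norm_neg, abs_neg] using
      norm_fourier_le_of_nonneg_compl hh.neg hK (fun w hw => neg_nonneg.mpr (hneg w hw)) x

end Positivity

lemma nonneg_or_nonpos_of_ne_zero {X : Type*} [TopologicalSpace X] {s : Set X} {h : X → ℝ}
    (hs : IsPreconnected s) (hh : ContinuousOn h s) (hne : ∀ x ∈ s, h x ≠ 0) :
    (∀ x ∈ s, 0 ≤ h x) ∨ ∀ x ∈ s, h x ≤ 0 := by
  by_contra!
  obtain ⟨⟨x, hx, hneg⟩, y, hy, hpos⟩ := this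
  obtain ⟨c, hc, hc0⟩ := hs.intermediate_value hx hy hh ⟨hneg.le, hpos.le⟩
  exact hne c hc hc0

section CriticalLine

/-- The completed zeta function along the critical line, as a real function; the factor `4π`
matches the normalisation of the Fourier transform and the factor `2` that of `thetaKernel`. -/
noncomputable def criticalLineZeta (w : ℝ) : ℝ :=
  2 * (completedRiemannZeta (1 / 2 + 4 * Real.pi * w * I)).re

lemma completedRiemannZeta_conj (s : ℂ) :
    completedRiemannZeta (starRingEnd ℂ s) = starRingEnd ℂ (completedRiemannZeta s) := by
  wlog hs : 0 < s.re generalizing s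
  · have h := this (1 - s) (by simp; linarith)
    rwa [map_sub, map_one, completedRiemannZeta_one_sub, completedRiemannZeta_one_sub] at h
  have hΛ {s : ℂ} (hs : 0 < s.re) : completedRiemannZeta s = riemannZeta s * Gammaℝ s := by
    rw [riemannZeta_def_of_ne_zero (ne_zero_of_re_pos hs),
      div_mul_cancel₀ _ (Gammaℝ_ne_zero_of_re_pos hs)]
  have hpow :
      (Real.pi : ℂ) ^ (-starRingEnd ℂ s / 2) = starRingEnd ℂ ((Real.pi : ℂ) ^ (-s / 2)) := by
    have hexp : -starRingEnd ℂ s / 2 = starRingEnd ℂ (-s / 2) := by simp [map_ofNat]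
    have harg : (Real.pi : ℂ).arg ≠ Real.pi := by
      rw [arg_ofReal_of_nonneg Real.pi_pos.le]
      exact Real.pi_ne_zero.symm
    rw [hexp, cpow_conj _ _ harg, conj_ofReal]
  rw [hΛ hs, hΛ (by simpa using hs), riemannZeta_conj, Gammaℝ_def, Gammaℝ_def, hpow]
  rw [map_mul, map_mul, ← Gamma_conj, map_div₀, map_ofNat]

lemma ofReal_criticalLineZeta (w : ℝ) :
    (criticalLineZeta w : ℂ) = 2 * completedRiemannZeta (1 / 2 + 4 * Real.pi * w * I) := by
  set s : ℂ := 1 / 2 + 4 * Real.pi * w * I with hs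
  have hreal : starRingEnd ℂ (completedRiemannZeta s) = completedRiemannZeta s := by
    have hconj : starRingEnd ℂ s = 1 - s := Complex.ext (by norm_num [hs]) (by simp [hs])
    rw [← completedRiemannZeta_conj, hconj, completedRiemannZeta_one_sub]
  rw [criticalLineZeta, ofReal_mul, ofReal_ofNat, conj_eq_iff_re.mp hreal]

lemma criticalLineZeta_neg (w : ℝ) : criticalLineZeta (-w) = criticalLineZeta w := by
  have hone_sub : 1 / 2 + 4 * Real.pi * (-w : ℝ) * I = 1 - (1 / 2 + 4 * Real.pi * w * I) := by
    push_cast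
    ring
  rw [criticalLineZeta, criticalLineZeta, hone_sub, completedRiemannZeta_one_sub]

lemma continuous_criticalLineZeta : Continuous criticalLineZeta := by
  refine continuous_const.mul (continuous_re.comp (continuous_iff_continuousAt.mpr fun w => ?_))
  have hline : Continuous fun w : ℝ => (1 / 2 + 4 * Real.pi * w * I : ℂ) := by fun_prop
  have hre : (1 / 2 + 4 * Real.pi * w * I : ℂ).re = 1 / 2 := by simp
  exact ContinuousAt.comp' (differentiableAt_completedZeta (fun h => by norm_num [h] at hre)
    (fun h => by norm_num [h] at hre)).continuousAt hline.continuousAt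

lemma riemannZeta_eq_zero_of_criticalLineZeta_eq_zero {w : ℝ} (hw : criticalLineZeta w = 0) :
    riemannZeta (1 / 2 + 4 * Real.pi * w * I) = 0 := by
  have hs : (1 / 2 + 4 * Real.pi * w * I : ℂ) ≠ 0 := ne_zero_of_re_pos (by simp)
  have h := ofReal_criticalLineZeta w
  rw [hw, ofReal_zero, zero_eq_mul, or_iff_right two_ne_zero] at h
  rw [riemannZeta_def_of_ne_zero hs, h, zero_div]

end CriticalLine

lemma setIntegral_Iio_exp_mul_le {f : ℝ → ℝ} {a : ℝ} (hf : Integrable f)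
    (hfa : Integrable fun x => Real.exp (a * x) * f x) (ha : 0 ≤ a) (T : ℝ) :
    ∫ x in Iio T, |Real.exp (a * x) * f x| ≤ Real.exp (a * T) * ∫ x, |f x| :=
  calc ∫ x in Iio T, |Real.exp (a * x) * f x|
      ≤ ∫ x in Iio T, Real.exp (a * T) * |f x| := by
        refine setIntegral_mono_on hfa.abs.integrableOn (hf.abs.const_mul _).integrableOn
          measurableSet_Iio fun x hx => ?_
        rw [abs_mul, Real.abs_exp]
        gcongr
        exact (mem_Iio.mp hx).le
    _ ≤ ∫ x, Real.exp (a * T) * |f x| :=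
        setIntegral_le_integral (hf.abs.const_mul _) (ae_of_all _ fun x => by positivity)
    _ = Real.exp (a * T) * ∫ x, |f x| := integral_const_mul _ _

section ConstantSign

variable {φ : ℝ}

lemma norm_thetaKernel_le_of_mem_uIcc (hφ : |φ| < Real.pi / 2) {z : ℂ} (hz : z.im ∈ uIcc 0 φ) :
    ‖thetaKernel z‖ ≤ (1 + 1 / Real.cos φ) * Real.exp (-(1 / 4 * |z.re|)) := by
  have him : |z.im| ≤ |φ| := abs_le_abs_of_mem_uIcc_zero hz
  have hcos : Real.cos φ ≤ Real.cos z.im := by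
    rw [← Real.cos_abs φ, ← Real.cos_abs z.im]
    exact Real.cos_le_cos_of_nonneg_of_le_pi (abs_nonneg _) (by linarith [Real.pi_pos]) him
  have hcos_pos : 0 < Real.cos φ := Real.cos_pos_of_mem_Ioo (abs_lt.mp hφ)
  refine (norm_thetaKernel_le (him.trans_lt hφ)).trans ?_
  have hquarter : -|z.re| / 4 = -(1 / 4 * |z.re|) := by ring
  rw [hquarter]
  gcongr

lemma continuous_thetaKernel_line (hφ : |φ| < Real.pi / 2) :
    Continuous fun x : ℝ => thetaKernel (x + φ * I) := by
  have hline : Continuous fun x : ℝ => (x + φ * I : ℂ) := by fun_prop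
  exact continuous_iff_continuousAt.mpr fun x => ContinuousAt.comp'
    (differentiableAt_thetaKernel (by simpa using hφ)).continuousAt hline.continuousAt

lemma integrable_thetaKernel_line (hφ : |φ| < Real.pi / 2) :
    Integrable fun x : ℝ => thetaKernel (x + φ * I) := by
  refine ((integrable_exp_neg_mul_abs (by norm_num : (0 : ℝ) < 1 / 4)).const_mul
    (1 + 1 / Real.cos φ)).mono' (continuous_thetaKernel_line hφ).aestronglyMeasurable
    (ae_of_all _ fun x => ?_)
  simpa using norm_thetaKernel_le_of_mem_uIcc hφ (z := x + φ * I) (by simp)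

lemma fourierInv_thetaKernel_line (hφ : |φ| < Real.pi / 2) (w : ℝ) :
    𝓕⁻ (fun x : ℝ => thetaKernel (x + φ * I)) w =
      (Real.exp (2 * Real.pi * φ * w) * criticalLineZeta w : ℝ) := by
  have hquarter : (0 : ℝ) < 1 / 4 := by norm_num
  rw [fourierInv_comp_add_mul_I (B := fun x => (1 + 1 / Real.cos φ) * Real.exp (-(1 / 4 * |x|)))
    (fun z hz => differentiableAt_thetaKernel ?_)
    (fun z hz => norm_thetaKernel_le_of_mem_uIcc hφ hz)
    ((integrable_exp_neg_mul_abs hquarter).const_mul _)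
    (by simpa using (tendsto_exp_neg_mul_abs_cocompact hquarter).const_mul (1 + 1 / Real.cos φ)),
    Real.fourierInv_eq_fourier_neg, fourier_thetaKernel, ← ofReal_criticalLineZeta,
    criticalLineZeta_neg, ofReal_mul, real_smul]
  exact (abs_le_abs_of_mem_uIcc_zero hz).trans_lt hφ

-- `criticalLineZeta` decays faster than every `exp (-2πb|w|)` with `b < π / 2`, since its products
-- with `exp (± 2πbw)` are Fourier transforms of integrable functions.
lemma integrable_exp_mul_criticalLineZeta (hφ : |φ| < Real.pi / 2) :
    Integrable fun w => Real.exp (2 * Real.pi * φ * w) * criticalLineZeta w := by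
  obtain ⟨b, hb, hb_lt⟩ := exists_between hφ
  have hb_pos : 0 < b := (abs_nonneg φ).trans_lt hb
  have bound {ψ : ℝ} (hψ : |ψ| = b) (w : ℝ) :
      Real.exp (2 * Real.pi * ψ * w) * |criticalLineZeta w| ≤
        max (∫ x : ℝ, ‖thetaKernel (x + b * I)‖) (∫ x : ℝ, ‖thetaKernel (x + (-b : ℝ) * I)‖) := by
    calc Real.exp (2 * Real.pi * ψ * w) * |criticalLineZeta w|
        = ‖𝓕⁻ (fun x : ℝ => thetaKernel (x + ψ * I)) w‖ := by
          rw [fourierInv_thetaKernel_line (hψ.trans_lt hb_lt), norm_real, norm_mul,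
            Real.norm_eq_abs, Real.abs_exp, Real.norm_eq_abs]
      _ ≤ ∫ x : ℝ, ‖thetaKernel (x + ψ * I)‖ :=
          VectorFourier.norm_fourierIntegral_le_integral_norm 𝐞 volume (-innerₗ ℝ) _ w
      _ ≤ _ := by
          rcases eq_or_eq_neg_of_abs_eq hψ with rfl | rfl
          · exact le_max_left _ _
          · exact le_max_right _ _
  refine integrable_exp_mul_of_le (b := 2 * Real.pi * b)
    continuous_criticalLineZeta.aestronglyMeasurable ?_ (bound (abs_of_pos hb_pos)) fun w => ?_
  · rw [abs_mul, abs_of_pos Real.two_pi_pos]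
    gcongr
  · simpa only [mul_neg] using bound (ψ := -b) (by rw [abs_neg, abs_of_pos hb_pos]) w

lemma thetaKernel_eq_fourier (hφ : |φ| < Real.pi / 2) (x : ℝ) :
    thetaKernel (x + φ * I) =
      𝓕 (fun w => ((Real.exp (2 * Real.pi * φ * w) * criticalLineZeta w : ℝ) : ℂ)) x := by
  have hinv : 𝓕⁻ (fun x : ℝ => thetaKernel (x + φ * I)) =
      fun w => ((Real.exp (2 * Real.pi * φ * w) * criticalLineZeta w : ℝ) : ℂ) :=
    funext (fourierInv_thetaKernel_line hφ)
  have hint : Integrable (𝓕 fun x : ℝ => thetaKernel (x + φ * I)) := by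
    have h := (integrable_exp_mul_criticalLineZeta hφ).ofReal (𝕜 := ℂ)
    refine h.comp_neg.congr (ae_of_all _ fun w => ?_)
    have := fourierInv_thetaKernel_line hφ (-w)
    rw [Real.fourierInv_eq_fourier_neg, neg_neg] at this
    exact this.symm
  rw [← hinv, (integrable_thetaKernel_line hφ).fourier_fourierInv_eq hint
    (continuous_thetaKernel_line hφ).continuousAt]

lemma norm_thetaKernel_mul_I_le (hφ0 : 0 ≤ φ) (hφ : φ < Real.pi / 2) :
    ‖thetaKernel (φ * I)‖ ≤ 22 := by
  have hre : 0 < (cexp (φ * I)).re := exp_re_pos (by simpa [abs_of_nonneg hφ0] using hφ)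
  have him : 0 ≤ (cexp (φ * I)).im := by
    rw [exp_ofReal_mul_I_im]
    exact Real.sin_nonneg_of_nonneg_of_le_pi hφ0 (by linarith [Real.pi_pos])
  have hθ := norm_halfPlaneTheta_le_of_norm_eq_one hre him (norm_exp_ofReal_mul_I φ)
  have hexp : ‖cexp (φ * I / 4)‖ = 1 := by simp [norm_exp]
  have hexp_neg : ‖cexp (-(φ * I) / 4)‖ = 1 := by simp [norm_exp]
  calc ‖thetaKernel (φ * I)‖
      ≤ ‖cexp (φ * I / 4) * halfPlaneTheta (cexp (φ * I))‖ + ‖cexp (φ * I / 4)‖ +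
          ‖cexp (-(φ * I) / 4)‖ := (norm_sub_le _ _).trans (by gcongr; exact norm_sub_le _ _)
    _ ≤ 22 := by
        rw [norm_mul, hexp, hexp_neg]
        linarith

lemma exists_norm_thetaKernel_le_of_sign {T : ℝ} (hT : 0 ≤ T)
    (hsign : (∀ w ≥ T, 0 ≤ criticalLineZeta w) ∨ ∀ w ≥ T, criticalLineZeta w ≤ 0) :
    ∃ C, ∀ u : ℂ, 0 ≤ u.im → u.im < Real.pi / 2 → ‖thetaKernel u‖ ≤ C := by
  refine ⟨22 + 2 * (Real.exp (Real.pi ^ 2 * T) * ∫ w, |criticalLineZeta w|), fun u hu0 hu => ?_⟩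
  have him : |u.im| < Real.pi / 2 := by rwa [abs_of_nonneg hu0]
  set h : ℝ → ℝ := fun w => Real.exp (2 * Real.pi * u.im * w) * criticalLineZeta w
  have hh : Integrable h := integrable_exp_mul_criticalLineZeta him
  have hfourier (x : ℝ) : 𝓕 (fun w => (h w : ℂ)) x = thetaKernel (x + u.im * I) :=
    (thetaKernel_eq_fourier him x).symm
  have hh_sign : (∀ w ∉ Iio T, 0 ≤ h w) ∨ ∀ w ∉ Iio T, h w ≤ 0 :=
    hsign.imp (fun hpos w hw => mul_nonneg (Real.exp_pos _).le (hpos w (not_lt.mp hw)))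
      fun hneg w hw => mul_nonpos_of_nonneg_of_nonpos (Real.exp_pos _).le (hneg w (not_lt.mp hw))
  have hξ : Integrable criticalLineZeta := by
    simpa using integrable_exp_mul_criticalLineZeta (φ := 0) (by simp [Real.pi_pos])
  have hleft : ∫ w in Iio T, |h w| ≤ Real.exp (Real.pi ^ 2 * T) * ∫ w, |criticalLineZeta w| := by
    refine (setIntegral_Iio_exp_mul_le hξ hh (by positivity) T).trans ?_
    gcongr
    nlinarith [Real.pi_pos]
  calc ‖thetaKernel u‖
      = ‖𝓕 (fun w => (h w : ℂ)) u.re‖ := by rw [hfourier, re_add_im]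
    _ ≤ ‖𝓕 (fun w => (h w : ℂ)) 0‖ + 2 * ∫ w in Iio T, |h w| :=
        norm_fourier_le_of_sign_compl hh measurableSet_Iio hh_sign u.re
    _ ≤ _ := by
        rw [hfourier, ofReal_zero, zero_add]
        gcongr
        exact norm_thetaKernel_mul_I_le hu0 hu

lemma norm_halfPlaneTheta_exp_le {u : ℂ} (hu : 0 ≤ u.re) :
    ‖halfPlaneTheta (cexp u)‖ ≤ ‖thetaKernel u‖ + 2 := by
  have hθ : halfPlaneTheta (cexp u) = cexp (-u / 4) * thetaKernel u + 1 + cexp (-u / 2) := by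
    have hinv : cexp (-u / 4) * cexp (u / 4) = 1 := by
      rw [← Complex.exp_add, neg_div, neg_add_cancel, Complex.exp_zero]
    have hsq : cexp (-u / 4) * cexp (-u / 4) = cexp (-u / 2) := by
      rw [← Complex.exp_add]
      congr 1
      ring
    rw [thetaKernel]
    linear_combination (1 - halfPlaneTheta (cexp u)) * hinv + hsq
  have hexp_le {r : ℝ} (hr : 0 < r) : ‖cexp (-u / r)‖ ≤ 1 := by
    rw [norm_exp, Real.exp_le_one_iff, div_ofReal_re, neg_re]
    exact div_nonpos_of_nonpos_of_nonneg (neg_nonpos.mpr hu) hr.le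
  calc ‖halfPlaneTheta (cexp u)‖
      ≤ ‖cexp (-u / 4)‖ * ‖thetaKernel u‖ + 1 + ‖cexp (-u / 2)‖ := by
        rw [hθ]
        refine (norm_add_le _ _).trans ?_
        grw [norm_add_le, norm_mul, norm_one]
    _ ≤ 1 * ‖thetaKernel u‖ + 1 + 1 := by
        gcongr
        · exact hexp_le (r := 4) (by norm_num)
        · exact hexp_le (r := 2) (by norm_num)
    _ = ‖thetaKernel u‖ + 2 := by ring

lemma not_bounded_thetaKernel :
    ¬∃ C, ∀ u : ℂ, 0 ≤ u.im → u.im < Real.pi / 2 → ‖thetaKernel u‖ ≤ C := by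
  rintro ⟨C, hC⟩
  obtain ⟨ε, hlarge, hε⟩ := ((tendsto_norm_halfPlaneTheta_add_two_mul_I.eventually_gt_atTop
    (C + 2)).and self_mem_nhdsWithin).exists
  set z : ℂ := ε + 2 * I with hz
  have hz_re : 0 < z.re := by simpa [hz] using hε
  have hz_im : z.im = 2 := by simp [hz]
  have hlog_re : 0 ≤ (log z).re := by
    rw [log_re]
    exact Real.log_nonneg (by linarith [im_le_norm z])
  have hlog_im : 0 ≤ (log z).im := by
    rw [log_im, arg_nonneg_iff]
    linarith
  have hlog_im_lt : (log z).im < Real.pi / 2 := by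
    rw [log_im]
    exact (abs_lt.mp (abs_arg_lt_pi_div_two_iff.mpr (Or.inl hz_re))).2
  have hθ := norm_halfPlaneTheta_exp_le hlog_re
  rw [exp_log (ne_zero_of_re_pos hz_re)] at hθ
  linarith [hC (log z) hlog_im hlog_im_lt]

lemma exists_criticalLineZeta_eq_zero (T : ℝ) : ∃ w ≥ T, criticalLineZeta w = 0 := by
  wlog hT : 0 ≤ T
  · obtain ⟨w, hw, hzero⟩ := this 0 le_rfl
    exact ⟨w, (not_le.mp hT).le.trans hw, hzero⟩
  by_contra! hne
  exact not_bounded_thetaKernel <| exists_norm_thetaKernel_le_of_sign hT <|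
    nonneg_or_nonpos_of_ne_zero isPreconnected_Ici continuous_criticalLineZeta.continuousOn hne

end ConstantSign

end HardyTheorem

/-- The Riemann zeta function has infinitely many zeros on the critical line. -/
theorem infinite_zeros_on_critical_line :
    {t : ℝ | riemannZeta (1 / 2 + t * Complex.I) = 0}.Infinite := by
  refine Set.infinite_of_not_bddAbove fun ⟨M, hM⟩ => ?_
  obtain ⟨w, hw, hzero⟩ := exists_criticalLineZeta_eq_zero (|M| + 1)
  have hle : 4 * Real.pi * w ≤ M := hM <| by
    simpa using riemannZeta_eq_zero_of_criticalLineZeta_eq_zero hzero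
  nlinarith [Real.pi_gt_three, le_abs_self M, abs_nonneg M]
end

section
/- Assume the Riemann hypothesis: every complex zero s of ζ with 0 < Re(s) < 1 satisfies Re(s) = 1/2. Then there exists a constant C > 0 such that for all real x ≥ 2, |π(x) − ∫_2^x dt/log t| ≤ C · √x · log x. -/
/-- The prime counting function: the number of primes `≤ x`. -/
noncomputable def primePi (x : ℝ) : ℕ := Nat.primeCounting ⌊x⌋₊

/-!
Let `G` be the logarithmic derivative of `(s - 1) ζ(s)`, and suppose that `ζ` does not vanish for
`Re s > α`, where `1/2 ≤ α < 1`; the Riemann hypothesis is the case `α = 1/2`. Perron's formula with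
the kernel `x ^ (s + 1) / (s (s + 1))` expresses `∑_{n ≤ x} Λ(n) (x - n)` through `G`. As `ψ` is
monotone, the difference quotient of this sum between `x` and `x + h`, with `h` of size `x ^ α`,
determines `ψ` closely enough. The line of integration is moved to `Re s = α + κ / log x`.

No zeros are counted. Since all zeros lie to the left of the line, the Borel–Carathéodory theorem,
applied after dividing out the nearby zeros, gives `Re G ≥ -C log |t|` there. The mean of `Re G`
against the weight `⟨t⟩ ^ (-1 - θ)` is bounded by a contour shift to `Re s = 6/5`, so the lower
bound turns into an `L¹` bound for `Re G`. To use the real part alone, write `G = 2 Re G - conj G`: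
the integral of `conj G` against the kernel is the conjugate of that of `G` against the reflected
kernel, which is small after a shift to the right. This gives `ψ(x) = x + O(x ^ α log² x)`, and
partial summation passes to `π(x)`.
-/

open Complex Filter Topology Set MeasureTheory Metric

section LogarithmicDerivative

variable {F : ℂ → ℂ} {c z a : ℂ} {r ρ A : ℝ}

lemma exists_eq_mul_exp_of_ne_zero_on_ball (hF : DifferentiableOn ℂ F (ball c r))
    (hne : ∀ w ∈ ball c r, F w ≠ 0) :
    ∃ L : ℂ → ℂ, L c = 0 ∧ (∀ w ∈ ball c r, HasDerivAt L (logDeriv F w) w) ∧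
      ∀ w ∈ ball c r, F w = F c * exp (L w) := by
  obtain ⟨L, hLc, hL⟩ := ((hF.deriv isOpen_ball).div hF hne).isExactOn_ball.with_val_at c 0
  refine ⟨L, hLc, hL, fun w hw => ?_⟩
  have hderiv : ∀ w ∈ ball c r, HasDerivAt (fun w => F w * exp (-L w)) 0 w := by
    intro w hw
    have hFw := (hF.differentiableAt (isOpen_ball.mem_nhds hw)).hasDerivAt
    refine (hFw.mul (hL w hw).fun_neg.cexp).congr_deriv ?_
    rw [Pi.div_apply]
    have := hne w hw
    field_simp
    ring
  have hconst : F w * exp (-L w) = F c := by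
    simpa [hLc] using isOpen_ball.is_const_of_deriv_eq_zero (convex_ball c r).isPreconnected
      (fun w hw => (hderiv w hw).differentiableAt.differentiableWithinAt)
      (fun w hw => (hderiv w hw).deriv) hw
      (mem_ball_self (pos_of_mem_ball hw))
  rw [← hconst, mul_assoc, ← exp_add, neg_add_cancel, exp_zero, mul_one]

lemma norm_le_of_re_le_on_ball {L : ℂ → ℂ} (hA : 0 < A) (hLc : L c = 0)
    (hL : DifferentiableOn ℂ L (ball c r)) (hre : ∀ w ∈ ball c r, (L w).re ≤ A)
    (hρ : ρ < r) (hz : z ∈ closedBall c ρ) : ‖L z‖ ≤ 2 * A * ρ / (r - ρ) := by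
  have hzρ : ‖z - c‖ ≤ ρ := by simpa [dist_eq_norm] using hz
  have hmaps : MapsTo (c + ·) (ball 0 r) (ball c r) := fun w hw => by
    simpa [dist_eq_norm] using hw
  have hbound := borelCaratheodory_zero (f := fun w => L (c + w)) (z := z - c) hA
    (hL.comp (by fun_prop) hmaps) (fun w hw => hre _ (hmaps hw))
    ((norm_nonneg _).trans_lt (hzρ.trans_lt hρ)) (by simpa using hzρ.trans_lt hρ)
    (by simpa using hLc)
  rw [add_sub_cancel] at hbound
  refine hbound.trans ?_
  have : 0 < r - ρ := sub_pos.mpr hρ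
  have : 0 ≤ ρ := (norm_nonneg _).trans hzρ
  gcongr

lemma exists_log_norm_le (hA : 0 < A) (hF : DifferentiableOn ℂ F (ball c r))
    (hne : ∀ w ∈ ball c r, F w ≠ 0) (hle : ∀ w ∈ ball c r, ‖F w‖ ≤ Real.exp A * ‖F c‖) :
    ∃ L : ℂ → ℂ, (∀ w ∈ ball c r, HasDerivAt L (logDeriv F w) w) ∧
      (∀ w ∈ ball c r, F w = F c * exp (L w)) ∧
      ∀ ρ < r, ∀ w ∈ closedBall c ρ, ‖L w‖ ≤ 2 * A * ρ / (r - ρ) := by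
  obtain ⟨L, hLc, hL, hexp⟩ := exists_eq_mul_exp_of_ne_zero_on_ball hF hne
  refine ⟨L, hL, hexp, fun ρ hρ w hw => norm_le_of_re_le_on_ball hA hLc
    (fun w hw => (hL w hw).differentiableAt.differentiableWithinAt) (fun w hw => ?_) hρ hw⟩
  have hFc : 0 < ‖F c‖ := norm_pos_iff.mpr (hne c (mem_ball_self (pos_of_mem_ball hw)))
  have hle := hle w hw
  rw [hexp w hw, norm_mul, norm_exp, mul_comm] at hle
  exact Real.exp_le_exp.mp (le_of_mul_le_mul_right hle hFc)

lemma norm_logDeriv_le_of_ne_zero (hA : 0 < A) (hF : DifferentiableOn ℂ F (ball c r))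
    (hne : ∀ w ∈ ball c r, F w ≠ 0) (hle : ∀ w ∈ ball c r, ‖F w‖ ≤ Real.exp A * ‖F c‖)
    (hρ : ρ < r) (hz : z ∈ closedBall c ρ) :
    ‖logDeriv F z‖ ≤ 4 * (r + ρ) / (r - ρ) ^ 2 * A := by
  obtain ⟨L, hL, -, hLle⟩ := exists_log_norm_le hA hF hne hle
  have hsub : closedBall z ((r - ρ) / 2) ⊆ closedBall c ((r + ρ) / 2) :=
    closedBall_subset_closedBall' (by linarith [mem_closedBall.mp hz])
  have hsub' : closedBall c ((r + ρ) / 2) ⊆ ball c r := closedBall_subset_ball (by linarith)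
  have hcauchy := norm_deriv_le_of_forall_mem_sphere_norm_le (f := L) (c := z)
    (show 0 < (r - ρ) / 2 by linarith)
    (DifferentiableOn.diffContOnCl_ball (U := closedBall z ((r - ρ) / 2))
      (fun w hw => (hL w (hsub' (hsub hw))).differentiableAt.differentiableWithinAt) le_rfl)
    (fun w hw => hLle _ (by linarith) w (hsub (sphere_subset_closedBall hw)))
  rw [(hL z (closedBall_subset_ball hρ hz)).deriv] at hcauchy
  refine hcauchy.trans_eq ?_
  have : r - ρ ≠ 0 := by linarith
  have : r - (r + ρ) / 2 = (r - ρ) / 2 := by ring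
  rw [this]
  field_simp
  ring

lemma exp_mul_norm_le_of_ne_zero (hA : 0 < A) (hF : DifferentiableOn ℂ F (ball c r))
    (hne : ∀ w ∈ ball c r, F w ≠ 0) (hle : ∀ w ∈ ball c r, ‖F w‖ ≤ Real.exp A * ‖F c‖)
    (hρ : ρ < r) (hz : z ∈ closedBall c ρ) :
    Real.exp (-(2 * ρ / (r - ρ) * A)) * ‖F c‖ ≤ ‖F z‖ := by
  obtain ⟨L, -, hexp, hLle⟩ := exists_log_norm_le hA hF hne hle
  rw [hexp z (closedBall_subset_ball hρ hz), norm_mul, norm_exp, mul_comm ‖F c‖]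
  gcongr
  have hbound := (abs_re_le_norm (L z)).trans (hLle ρ hρ z hz)
  refine (neg_le_neg ((le_abs_self (-(L z).re)).trans ?_)).trans_eq (neg_neg _)
  rw [abs_neg]
  exact hbound.trans_eq (by ring)

lemma norm_le_on_closedBall {B : ℝ} (hr : r ≠ 0) (hF : DiffContOnCl ℂ F (ball c r))
    (hB : ∀ w ∈ sphere c r, ‖F w‖ ≤ B) (hz : z ∈ closedBall c r) : ‖F z‖ ≤ B :=
  norm_le_of_forall_mem_frontier_norm_le isBounded_ball hF
    (fun w hw => hB w (frontier_ball_subset_sphere hw)) (by rwa [closure_ball c hr])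

lemma norm_factor_le_of_mem_sphere (ha : a ∈ ball c r) (hz : z ∈ sphere c (3 * r)) :
    ‖(c - a) / (z - a)‖ ≤ 1 / 2 := by
  have hca : ‖c - a‖ < r := by simpa [dist_eq_norm, norm_sub_rev] using ha
  have hzc : ‖z - c‖ = 3 * r := by simpa [dist_eq_norm] using hz
  have hsub : ‖z - c‖ ≤ ‖z - a‖ + ‖c - a‖ := by
    simpa using norm_sub_le (z - a) (c - a)
  rw [norm_div]
  exact (div_le_div_iff₀ (by linarith [norm_nonneg (c - a)]) two_pos).mpr (by linarith)

/-- Multiplying by `(c - a) / (w - a)` removes the zero `a` of `F`, keeps the value at `c`, and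
shrinks `F` on the sphere. -/
lemma exists_eq_factor_mul (hF : DiffContOnCl ℂ F (ball c (3 * r)))
    (hle : ∀ w ∈ closedBall c (3 * r), ‖F w‖ ≤ Real.exp A * ‖F c‖) (ha : a ∈ ball c r)
    (hFa : F a = 0) (hFc : F c ≠ 0) :
    ∃ H : ℂ → ℂ, (∀ w, F w = (w - a) / (c - a) * H w) ∧ H c = F c ∧
      DiffContOnCl ℂ H (ball c (3 * r)) ∧
      ∀ w ∈ closedBall c (3 * r), ‖H w‖ ≤ Real.exp (A - Real.log 2) * ‖F c‖ := by
  have hr : 0 < r := pos_of_mem_ball ha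
  have hca : c - a ≠ 0 := sub_ne_zero.mpr fun h => hFc (h ▸ hFa)
  have hnhds : ball c (3 * r) ∈ 𝓝 a := isOpen_ball.mem_nhds (ball_subset_ball (by linarith) ha)
  set H : ℂ → ℂ := fun w => (c - a) * dslope F a w
  have hfac : ∀ w, F w = (w - a) / (c - a) * H w := fun w => by
    rw [div_mul_eq_mul_div, mul_left_comm, mul_div_cancel_left₀ _ hca, ← smul_eq_mul,
      sub_smul_dslope, hFa, sub_zero]
  have hHd : DiffContOnCl ℂ H (ball c (3 * r)) :=
    ⟨((differentiableOn_dslope hnhds).mpr hF.1).const_mul _, continuousOn_const.mul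
      ((continuousOn_dslope (mem_of_superset hnhds subset_closure)).mpr
        ⟨hF.2, hF.1.differentiableAt hnhds⟩)⟩
  refine ⟨H, hfac, by simpa [div_self hca] using (hfac c).symm, hHd, fun w hw => ?_⟩
  refine norm_le_on_closedBall (by positivity) hHd (fun w hw => ?_) hw
  have hwa : w - a ≠ 0 := sub_ne_zero.mpr fun h => by
    rw [mem_sphere, h] at hw
    linarith [mem_ball.mp ha]
  calc ‖H w‖ = ‖F w‖ * ‖(c - a) / (w - a)‖ := by rw [← norm_mul, hfac w]; congr 1; field_simp
    _ ≤ Real.exp A * ‖F c‖ * (1 / 2) := by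
        gcongr
        exacts [hle w (sphere_subset_closedBall hw), norm_factor_le_of_mem_sphere ha hw]
    _ = Real.exp (A - Real.log 2) * ‖F c‖ := by
        rw [Real.exp_sub, Real.exp_log two_pos]; ring

lemma re_logDeriv_le_re_logDeriv_of_eq_factor_mul {H : ℂ → ℂ}
    (hfac : ∀ w, F w = (w - a) / (c - a) * H w) (hca : c ≠ a) (ha : a.re < z.re)
    (hH : DifferentiableAt ℂ H z) (hHz : H z ≠ 0) : (logDeriv H z).re ≤ (logDeriv F z).re := by
  have hza : z - a ≠ 0 := sub_ne_zero.mpr fun h => by simp [h] at ha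
  have hca' : c - a ≠ 0 := sub_ne_zero.mpr hca
  have hlin : logDeriv (fun w => (w - a) / (c - a)) z = (z - a)⁻¹ := by
    simp only [logDeriv_apply, deriv_div_const, deriv_sub_const, deriv_id'']
    field_simp
  rw [show F = fun w => (w - a) / (c - a) * H w from funext hfac,
    logDeriv_mul (f := fun w => (w - a) / (c - a)) z (div_ne_zero hza hca') hHz (by fun_prop) hH,
    hlin, add_re, inv_re, sub_re]
  have : 0 ≤ (z.re - a.re) / normSq (z - a) :=
    div_nonneg (sub_nonneg.mpr ha.le) (normSq_nonneg _)
  linarith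

/-- Zeros of `F` to the left of `z` only increase `Re (F' / F)(z)`, and dividing them out leads to
the zero-free case; each division costs a fixed part of `A`, so the process stops. -/
lemma neg_mul_le_re_logDeriv (hr : 0 < r) (hF : DiffContOnCl ℂ F (ball c (3 * r))) (hFc : F c ≠ 0)
    (hA : 0 < A) (hle : ∀ w ∈ closedBall c (3 * r), ‖F w‖ ≤ Real.exp A * ‖F c‖)
    (hz : z ∈ closedBall c (r / 2)) (hzero : ∀ a ∈ ball c r, F a = 0 → a.re < z.re) :
    -(24 / r * A) ≤ (logDeriv F z).re := by
  obtain ⟨n, hn⟩ := exists_nat_ge (2 * A)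
  induction n generalizing F A with
  | zero => exact absurd hn (by push_cast; linarith)
  | succ n ih =>
    have hsub : ball c r ⊆ ball c (3 * r) := ball_subset_ball (by linarith)
    have hzr : z ∈ ball c r := closedBall_subset_ball (by linarith) hz
    by_cases hne : ∀ w ∈ ball c r, F w ≠ 0
    · have hbound := norm_logDeriv_le_of_ne_zero hA (hF.1.mono hsub) hne
        (fun w hw => hle w (ball_subset_closedBall (hsub hw))) (by linarith) hz
      rw [show 4 * (r + r / 2) / (r - r / 2) ^ 2 = 24 / r by field_simp; ring] at hbound
      exact (abs_le.mp ((abs_re_le_norm _).trans hbound)).1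
    · push Not at hne
      obtain ⟨a, ha, hFa⟩ := hne
      obtain ⟨H, hfac, hHc, hHd, hHle⟩ := exists_eq_factor_mul hF hle ha hFa hFc
      have hHzero : ∀ w, H w = 0 → F w = 0 := fun w hw => by rw [hfac, hw, mul_zero]
      have hlog : 1 / 2 < Real.log 2 := by linarith [Real.log_two_gt_d9]
      have hAlog : 0 ≤ A - Real.log 2 := by
        have hHcle := hHle c (mem_closedBall_self (by positivity))
        rw [hHc] at hHcle
        exact Real.one_le_exp_iff.mp (one_le_of_le_mul_right₀ (norm_pos_iff.mpr hFc) hHcle)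
      have hHre := ih (A := A - 1 / 2) hHd (hHc ▸ hFc) (by linarith)
        (fun w hw => (hHle w hw).trans (by rw [hHc]; gcongr))
        (fun b hb hHb => hzero b hb (hHzero b hHb)) (by push_cast at hn; linarith)
      have hmono := re_logDeriv_le_re_logDeriv_of_eq_factor_mul hfac (fun h => hFc (h ▸ hFa))
        (hzero a ha hFa) (hHd.differentiableAt isOpen_ball (hsub hzr))
        (fun h => (hzero z hzr (hHzero z h)).false)
      have : 24 / r * (A - 1 / 2) ≤ 24 / r * A := by gcongr; linarith
      linarith

end LogarithmicDerivative

section Zeta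

/-- The entire function `(s - 1) ζ(s)`, with its removable singularity at `s = 1` filled in. -/
noncomputable def zetaMulSubOne : ℂ → ℂ := Function.update (fun s => (s - 1) * riemannZeta s) 1 1

variable {s : ℂ}

lemma zetaMulSubOne_of_ne_one (h : s ≠ 1) : zetaMulSubOne s = (s - 1) * riemannZeta s :=
  Function.update_of_ne h _ _

lemma zetaMulSubOne_one : zetaMulSubOne 1 = 1 := Function.update_self _ _ _

lemma zetaMulSubOne_eventuallyEq (h : s ≠ 1) :
    zetaMulSubOne =ᶠ[𝓝 s] fun s => (s - 1) * riemannZeta s := by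
  filter_upwards [isOpen_ne.mem_nhds h] with z hz using zetaMulSubOne_of_ne_one hz

lemma differentiable_zetaMulSubOne : Differentiable ℂ zetaMulSubOne := by
  have hne : ∀ s : ℂ, s ≠ 1 → DifferentiableAt ℂ zetaMulSubOne s := fun s hs =>
    ((differentiableAt_id.sub_const 1).mul (differentiableAt_riemannZeta hs)).congr_of_eventuallyEq
      (zetaMulSubOne_eventuallyEq hs)
  intro s
  rcases eq_or_ne s 1 with rfl | hs
  · refine (analyticAt_of_differentiable_on_punctured_nhds_of_continuousAt
      ?_ ?_).differentiableAt
    · filter_upwards [self_mem_nhdsWithin] with z hz using hne z hz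
    · exact continuousAt_update_same.mpr riemannZeta_residue_one
  · exact hne s hs

lemma zetaMulSubOne_ne_zero (h : riemannZeta s ≠ 0) : zetaMulSubOne s ≠ 0 := by
  rcases eq_or_ne s 1 with rfl | hs
  · simp [zetaMulSubOne_one]
  · rw [zetaMulSubOne_of_ne_one hs]
    exact mul_ne_zero (sub_ne_zero.mpr hs) h

/-- The integral `∫₁^∞ {t} t^(-s-1) dt`, holomorphic for `Re s > 0`, which continues `ζ`. -/
noncomputable def fractIntegral (s : ℂ) : ℂ :=
  ∫ t in Ioi (1 : ℝ), ((Int.fract t : ℝ) : ℂ) * (t : ℂ) ^ (-(s + 1))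

lemma norm_fract_mul_cpow_le {t : ℝ} (ht : 0 < t) (s : ℂ) :
    ‖((Int.fract t : ℝ) : ℂ) * (t : ℂ) ^ (-(s + 1))‖ ≤ t ^ (-(s.re + 1)) := by
  rw [norm_mul, norm_real, Real.norm_eq_abs, abs_of_nonneg (Int.fract_nonneg t),
    norm_cpow_eq_rpow_re_of_pos ht]
  exact mul_le_of_le_one_left (by positivity) (Int.fract_lt_one t).le

lemma measurable_fract_mul_cpow (s : ℂ) :
    Measurable fun t : ℝ => ((Int.fract t : ℝ) : ℂ) * (t : ℂ) ^ (-(s + 1)) := by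
  fun_prop

lemma integrableOn_rpow_neg_add_one {σ : ℝ} (hσ : 0 < σ) :
    IntegrableOn (fun t : ℝ => t ^ (-(σ + 1))) (Ioi 1) :=
  integrableOn_Ioi_rpow_of_lt (by linarith) one_pos

lemma integrableOn_fract_mul_cpow (hs : 0 < s.re) :
    IntegrableOn (fun t : ℝ => ((Int.fract t : ℝ) : ℂ) * (t : ℂ) ^ (-(s + 1))) (Ioi 1) := by
  refine Integrable.mono' (integrableOn_rpow_neg_add_one hs)
    (measurable_fract_mul_cpow s).aestronglyMeasurable ?_
  filter_upwards [ae_restrict_mem measurableSet_Ioi] with t ht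
  exact norm_fract_mul_cpow_le (one_pos.trans ht) s

lemma norm_fractIntegral_le (hs : 0 < s.re) :
    ‖fractIntegral s‖ ≤ 1 / s.re := by
  have hle := norm_integral_le_of_norm_le (integrableOn_rpow_neg_add_one hs)
    ((ae_restrict_mem measurableSet_Ioi).mono fun t ht =>
      norm_fract_mul_cpow_le (one_pos.trans ht) s)
  rwa [integral_Ioi_rpow_of_lt (by linarith) one_pos, Real.one_rpow,
    show -(s.re + 1) + 1 = -s.re by ring, neg_div_neg_eq] at hle

lemma fractIntegral_eq_mellin (s : ℂ) :
    fractIntegral s = mellin ((Ioi 1).indicator fun t => ((Int.fract t : ℝ) : ℂ)) (-s) := by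
  have hind : ∀ t : ℝ,
      (t : ℂ) ^ (-s - 1) • (Ioi 1).indicator (fun t => ((Int.fract t : ℝ) : ℂ)) t =
        (Ioi 1).indicator (fun t : ℝ => ((Int.fract t : ℝ) : ℂ) * (t : ℂ) ^ (-(s + 1))) t := by
    intro t
    rw [smul_eq_mul, mul_comm, neg_add', indicator_mul_left]
  simp_rw [mellin, hind]
  rw [setIntegral_indicator measurableSet_Ioi, inter_eq_right.mpr (Ioi_subset_Ioi zero_le_one),
    fractIntegral]

lemma differentiableAt_fractIntegral (hs : 0 < s.re) :
    DifferentiableAt ℂ fractIntegral s := by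
  set φ : ℝ → ℂ := (Ioi 1).indicator fun t => ((Int.fract t : ℝ) : ℂ)
  have hφ : ∀ t, ‖φ t‖ ≤ 1 := fun t => by
    refine (norm_indicator_le_norm_self _ _).trans ?_
    rw [norm_real, Real.norm_eq_abs, abs_of_nonneg (Int.fract_nonneg t)]
    exact (Int.fract_lt_one t).le
  have hφm : Measurable φ := Measurable.indicator (by fun_prop) measurableSet_Ioi
  have hbot : φ =O[𝓝[>] 0] (· ^ (-(-s.re - 1) : ℝ)) := by
    refine (Asymptotics.isBigO_zero _ _).congr' ?_ .rfl
    filter_upwards [Ioo_mem_nhdsGT one_pos] with t ht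
    exact (indicator_of_notMem (notMem_Ioi.mpr ht.2.le) _).symm
  have htop : φ =O[atTop] (· ^ (-0 : ℝ)) := .of_bound 1 (.of_forall fun t => by simpa using hφ t)
  have hmellin : DifferentiableAt ℂ (mellin φ) (-s) :=
    mellin_differentiableAt_of_isBigO_rpow
      ((locallyIntegrable_const (1 : ℝ)).mono hφm.aestronglyMeasurable
        (.of_forall fun t => by simpa using hφ t) |>.locallyIntegrableOn _)
      htop (by simpa using hs) hbot (by simp)
  exact (hmellin.comp s differentiableAt_id.neg).congr_of_eventuallyEq
    (.of_forall fractIntegral_eq_mellin)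

lemma zetaMulSubOne_eq_sub_integral_of_one_lt_re (hs : 1 < s.re) :
    zetaMulSubOne s = s - s * (s - 1) * fractIntegral s := by
  have hs1 : s ≠ 1 := by rintro rfl; simp at hs
  have hneg : (-s).re < -1 := by simpa using neg_lt_neg hs
  have hzeta : riemannZeta s = s * ∫ t in Ioi (1 : ℝ), ((⌊t⌋₊ : ℂ)) * (t : ℂ) ^ (-(s + 1)) := by
    have := LSeries_eq_mul_integral_of_nonneg (fun _ => 1) zero_le_one hs ?_ fun _ => zero_le_one
    · simpa [← LSeries_one_eq_riemannZeta hs, Pi.one_def] using this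
    · simpa using Asymptotics.isBigO_refl _ _
  have hfloor : ∫ t in Ioi (1 : ℝ), ((⌊t⌋₊ : ℂ)) * (t : ℂ) ^ (-(s + 1)) =
      (∫ t in Ioi (1 : ℝ), (t : ℂ) ^ (-s)) - fractIntegral s := by
    rw [fractIntegral, ← integral_sub (integrableOn_Ioi_cpow_of_lt hneg one_pos)
      (integrableOn_fract_mul_cpow (by linarith))]
    refine setIntegral_congr_fun measurableSet_Ioi fun t (ht : 1 < t) => ?_
    have ht0 : (t : ℂ) ≠ 0 := ofReal_ne_zero.mpr (by linarith)
    have hfract : ((Int.fract t : ℝ) : ℂ) = t - ⌊t⌋₊ := by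
      rw [Int.fract, ← natCast_floor_eq_intCast_floor (by linarith)]
      push_cast
      rfl
    rw [hfract, sub_mul, neg_add, cpow_add _ _ ht0, cpow_neg_one]
    field_simp
    ring
  rw [zetaMulSubOne_of_ne_one hs1, hzeta, hfloor, integral_Ioi_cpow_of_lt hneg one_pos]
  have : 1 - s ≠ 0 := sub_ne_zero.mpr hs1.symm
  rw [neg_add_eq_sub, ofReal_one, one_cpow]
  field_simp
  ring

lemma zetaMulSubOne_eq_sub_integral (hs : 0 < s.re) :
    zetaMulSubOne s = s - s * (s - 1) * fractIntegral s := by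
  have hopen : IsOpen {s : ℂ | 0 < s.re} := isOpen_lt continuous_const continuous_re
  have hright : DifferentiableOn ℂ (fun s => s - s * (s - 1) * fractIntegral s)
      {s | 0 < s.re} :=
    fun s hs => (differentiableAt_id.sub ((differentiableAt_id.mul
      (differentiableAt_id.sub_const 1)).mul
        (differentiableAt_fractIntegral hs))).differentiableWithinAt
  refine AnalyticOnNhd.eqOn_of_preconnected_of_eventuallyEq
    (differentiable_zetaMulSubOne.differentiableOn.analyticOnNhd hopen)
    (hright.analyticOnNhd hopen) (convex_halfSpace_re_gt 0).isPreconnected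
    (show (2 : ℂ) ∈ {s : ℂ | 0 < s.re} by simp) ?_ hs
  filter_upwards [(isOpen_lt continuous_const continuous_re).mem_nhds
    (show (1 : ℝ) < (2 : ℂ).re by simp)] with w hw
  exact zetaMulSubOne_eq_sub_integral_of_one_lt_re hw

lemma norm_zetaMulSubOne_le (hs : 0 < s.re) :
    ‖zetaMulSubOne s‖ ≤ ‖s‖ + ‖s‖ * ‖s - 1‖ / s.re := by
  rw [zetaMulSubOne_eq_sub_integral hs]
  refine (norm_sub_le _ _).trans ?_
  rw [norm_mul, norm_mul, div_eq_mul_one_div (‖s‖ * _)]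
  gcongr
  exact norm_fractIntegral_le hs

/-- The logarithmic derivative `1 / (s - 1) + ζ'(s) / ζ(s)` of `(s - 1) ζ(s)`. -/
noncomputable def zetaLogDeriv : ℂ → ℂ := logDeriv zetaMulSubOne

lemma differentiableAt_zetaLogDeriv (h : riemannZeta s ≠ 0) :
    DifferentiableAt ℂ zetaLogDeriv s :=
  (differentiable_zetaMulSubOne.analyticAt s).deriv.differentiableAt.div
    (differentiable_zetaMulSubOne s) (zetaMulSubOne_ne_zero h)

lemma zetaLogDeriv_eq_sub_LSeries (hs : 1 < s.re) :
    zetaLogDeriv s = 1 / (s - 1) - LSeries (fun n => (ArithmeticFunction.vonMangoldt n : ℂ)) s := by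
  have hs1 : s ≠ 1 := by rintro rfl; simp at hs
  rw [zetaLogDeriv, logDeriv_apply, (zetaMulSubOne_eventuallyEq hs1).deriv_eq,
    (zetaMulSubOne_eventuallyEq hs1).eq_of_nhds, ← logDeriv_apply,
    logDeriv_mul (f := (· - 1)) s (sub_ne_zero.mpr hs1)
      (riemannZeta_ne_zero_of_one_le_re hs.le) (by fun_prop) (differentiableAt_riemannZeta hs1),
    ArithmeticFunction.LSeries_vonMangoldt_eq_deriv_riemannZeta_div hs]
  simp [logDeriv_apply, neg_div, sub_neg_eq_add]

lemma norm_LSeries_le_tsum {f : ℕ → ℂ} {b : ℝ} (hf : LSeriesSummable f b) (hs : b ≤ s.re) :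
    ‖LSeries f s‖ ≤ ∑' n, ‖LSeries.term f b n‖ :=
  tsum_of_norm_bounded hf.norm.hasSum fun n =>
    LSeries.norm_term_le_of_re_le_re f (by simpa using hs) n

lemma exists_norm_zetaLogDeriv_le_of_one_lt {b : ℝ} (hb : 1 < b) :
    ∃ C : ℝ, 0 < C ∧ ∀ s : ℂ, b ≤ s.re → ‖zetaLogDeriv s‖ ≤ C := by
  have hsum : LSeriesSummable (fun n => (ArithmeticFunction.vonMangoldt n : ℂ)) b :=
    ArithmeticFunction.LSeriesSummable_vonMangoldt (by simpa using hb)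
  have : 0 < b - 1 := sub_pos.mpr hb
  refine ⟨1 / (b - 1) + ∑' n, ‖LSeries.term (fun n => (ArithmeticFunction.vonMangoldt n : ℂ)) b n‖,
    by positivity, fun s hs => ?_⟩
  rw [zetaLogDeriv_eq_sub_LSeries (hb.trans_le hs)]
  refine (norm_sub_le _ _).trans (add_le_add ?_ (norm_LSeries_le_tsum hsum hs))
  rw [norm_div, norm_one]
  gcongr
  exact le_trans (by simpa using hs) (re_le_norm (s - 1))

/-- From `ζ(s) · ∑ μ(n) n⁻ˢ = 1` and the boundedness of the Möbius series. -/
lemma exists_le_norm_zetaMulSubOne {b : ℝ} (hb : 1 < b) :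
    ∃ c : ℝ, 0 < c ∧ ∀ s : ℂ, b ≤ s.re → c ≤ ‖zetaMulSubOne s‖ := by
  set μ : ℕ → ℂ := fun n => (ArithmeticFunction.moebius n : ℂ)
  have hsum : LSeriesSummable μ b :=
    ArithmeticFunction.LSeriesSummable_moebius_iff.mpr (by simpa using hb)
  set B := ∑' n, ‖LSeries.term μ b n‖
  have : 0 ≤ B := tsum_nonneg fun _ => norm_nonneg _
  have : 0 < b - 1 := sub_pos.mpr hb
  refine ⟨(b - 1) / (1 + B), by positivity, fun s hs => ?_⟩
  have hs1 : 1 < s.re := hb.trans_le hs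
  have hprod : ‖riemannZeta s‖ * ‖LSeries μ s‖ = 1 := by
    rw [← norm_mul, ← ArithmeticFunction.LSeries_zeta_eq_riemannZeta hs1,
      ArithmeticFunction.LSeries_zeta_mul_Lseries_moebius hs1, norm_one]
  have hzeta : 1 ≤ ‖riemannZeta s‖ * (1 + B) := by
    rw [← hprod]
    gcongr
    linarith [norm_LSeries_le_tsum hsum hs]
  have hsub : b - 1 ≤ ‖s - 1‖ := le_trans (by simpa using hs) (re_le_norm (s - 1))
  rw [zetaMulSubOne_of_ne_one (by rintro rfl; simp at hs1), norm_mul,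
    div_le_iff₀ (by positivity), mul_assoc]
  exact hsub.trans (le_mul_of_one_le_right (norm_nonneg _) hzeta)

end Zeta

section Weights

/-- The power `⟨t⟩⁻ʳ` of the Japanese bracket `⟨t⟩ = √(1 + t²)`, which measures decay on vertical
lines. -/
noncomputable def bracketDecay (r t : ℝ) : ℝ := (1 + t ^ 2) ^ (-r / 2)

variable {r : ℝ}

lemma bracketDecay_pos (r t : ℝ) : 0 < bracketDecay r t := by
  unfold bracketDecay
  positivity

lemma bracketDecay_neg (r t : ℝ) : bracketDecay r (-t) = bracketDecay r t := by
  rw [bracketDecay, bracketDecay, neg_sq]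

lemma bracketDecay_two (t : ℝ) : bracketDecay 2 t = (1 + t ^ 2)⁻¹ := by
  rw [bracketDecay, neg_div_self two_ne_zero, Real.rpow_neg_one]

lemma bracketDecay_add (r s t : ℝ) :
    bracketDecay (r + s) t = bracketDecay r t * bracketDecay s t := by
  rw [bracketDecay, bracketDecay, bracketDecay, ← Real.rpow_add (by positivity)]
  ring_nf

lemma continuous_bracketDecay (r : ℝ) : Continuous (bracketDecay r) :=
  Continuous.rpow_const (by fun_prop) fun t => .inl (by positivity)

lemma integrable_bracketDecay (hr : 1 < r) : Integrable (bracketDecay r) := by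
  simpa [bracketDecay, Function.comp_def] using!
    integrable_rpow_neg_one_add_norm_sq (E := ℝ) (μ := volume) (r := r) (by simpa using hr)

lemma tendsto_bracketDecay_cocompact (hr : 0 < r) :
    Tendsto (bracketDecay r) (cocompact ℝ) (𝓝 0) := by
  have hsq : Tendsto (fun t : ℝ => 1 + ‖t‖ ^ 2) (cocompact ℝ) atTop :=
    tendsto_atTop_add_const_left _ _
      ((tendsto_pow_atTop two_ne_zero).comp (tendsto_norm_cocompact_atTop (E := ℝ)))
  refine ((tendsto_rpow_neg_atTop (half_pos hr)).comp hsq).congr fun t => ?_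
  rw [Function.comp_apply, bracketDecay, neg_div, Real.norm_eq_abs, sq_abs]

lemma integral_bracketDecay_le (hr : 1 < r) : ∫ t, bracketDecay r t ≤ 2 * r / (r - 1) := by
  have hint := integrable_bracketDecay hr
  have hnear : ∫ t in Ioc 0 1, bracketDecay r t ≤ 1 := by
    have h := setIntegral_mono_on hint.integrableOn (integrableOn_const (C := (1 : ℝ)) (by simp))
      measurableSet_Ioc fun t (_ : t ∈ Ioc (0 : ℝ) 1) =>
        Real.rpow_le_one_of_one_le_of_nonpos (by nlinarith [sq_nonneg t]) (by linarith)
    simpa using h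
  have hfar : ∫ t in Ioi 1, bracketDecay r t ≤ 1 / (r - 1) := by
    have h := setIntegral_mono_on hint.integrableOn
      (integrableOn_Ioi_rpow_of_lt (neg_lt_neg hr) one_pos) measurableSet_Ioi
      fun t (ht : 1 < t) => show bracketDecay r t ≤ t ^ (-r) by
        calc (1 + t ^ 2) ^ (-r / 2) ≤ (t ^ 2) ^ (-r / 2) :=
              Real.rpow_le_rpow_of_nonpos (by positivity) (by linarith) (by linarith)
          _ = t ^ (-r) := by
              rw [← Real.rpow_natCast_mul (by linarith)]
              congr 1
              push_cast
              ring
    rwa [integral_Ioi_rpow_of_lt (by linarith) one_pos, Real.one_rpow, neg_div, ← div_neg,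
      neg_add_rev, neg_neg, ← sub_eq_neg_add] at h
  have habs : ∫ t, bracketDecay r t = 2 * ∫ t in Ioi 0, bracketDecay r t := by
    simpa [bracketDecay] using integral_comp_abs (f := bracketDecay r)
  rw [habs, ← Ioc_union_Ioi_eq_Ioi zero_le_one, setIntegral_union (Ioc_disjoint_Ioi le_rfl)
    measurableSet_Ioi hint.integrableOn hint.integrableOn]
  refine (mul_le_mul_of_nonneg_left (add_le_add hnear hfar) zero_le_two).trans_eq ?_
  have : r - 1 ≠ 0 := by linarith
  field_simp
  ring

/-- The logarithmic scale `1 + log (1 + t²)` in which the growth of `ζ` at height `t` is measured;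
the summand `1` keeps it bounded below by `1`. -/
noncomputable def logHeight (t : ℝ) : ℝ := 1 + Real.log (1 + t ^ 2)

lemma one_le_logHeight (t : ℝ) : 1 ≤ logHeight t :=
  le_add_of_nonneg_right (Real.log_nonneg (by nlinarith [sq_nonneg t]))

lemma one_add_sq_le_exp_logHeight (t : ℝ) : 1 + t ^ 2 ≤ Real.exp (logHeight t) := by
  rw [← Real.log_le_iff_le_exp (by positivity), logHeight]
  linarith

lemma logHeight_mul_bracketDecay_le {ε : ℝ} (hε : 0 < ε) (hε2 : ε ≤ 2) (r t : ℝ) :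
    logHeight t * bracketDecay r t ≤ 2 / ε * bracketDecay (r - ε) t := by
  have hu : (0 : ℝ) < 1 + t ^ 2 := by positivity
  have hlog : ε / 2 * Real.log (1 + t ^ 2) ≤ (1 + t ^ 2) ^ (ε / 2) - 1 := by
    rw [← Real.log_rpow hu]
    exact Real.log_le_sub_one_of_pos (by positivity)
  have hle : logHeight t ≤ 2 / ε * bracketDecay (-ε) t := by
    rw [logHeight, bracketDecay, neg_neg, div_mul_eq_mul_div, le_div_iff₀ hε]
    linarith
  rw [sub_eq_neg_add, bracketDecay_add, ← mul_assoc]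
  exact mul_le_mul_of_nonneg_right hle (bracketDecay_pos r t).le

lemma continuous_logHeight : Continuous logHeight :=
  continuous_const.add (Continuous.log (by fun_prop) fun t => by positivity)

lemma integrable_logHeight_mul_bracketDecay (hr : 1 < r) :
    Integrable fun t => logHeight t * bracketDecay r t := by
  set ε := min 2 ((r - 1) / 2)
  have hε : 0 < ε := lt_min two_pos (by linarith)
  have hεr : ε ≤ (r - 1) / 2 := min_le_right _ _
  refine ((integrable_bracketDecay (r := r - ε) (by linarith)).const_mul (2 / ε)).mono'
    (continuous_logHeight.mul (continuous_bracketDecay r)).aestronglyMeasurable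
    (.of_forall fun t => ?_)
  rw [Real.norm_of_nonneg (mul_nonneg (zero_le_one.trans (one_le_logHeight t))
    (bracketDecay_pos r t).le)]
  exact logHeight_mul_bracketDecay_le hε (min_le_left _ _) r t

lemma tendsto_logHeight_mul_bracketDecay_cocompact (hr : 0 < r) :
    Tendsto (fun t => logHeight t * bracketDecay r t) (cocompact ℝ) (𝓝 0) := by
  set ε := min 2 (r / 2)
  have hε : 0 < ε := lt_min two_pos (half_pos hr)
  have hεr : ε ≤ r / 2 := min_le_right _ _
  have hlim := (tendsto_bracketDecay_cocompact (r := r - ε) (by linarith)).const_mul (2 / ε)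
  rw [mul_zero] at hlim
  exact squeeze_zero (fun t => mul_nonneg (zero_le_one.trans (one_le_logHeight t))
    (bracketDecay_pos r t).le) (logHeight_mul_bracketDecay_le hε (min_le_left _ _) r) hlim

lemma integral_logHeight_mul_bracketDecay_le {θ : ℝ} (hθ : 0 < θ) (hθ1 : θ ≤ 1) :
    ∫ t, logHeight t * bracketDecay (1 + θ) t ≤ 24 / θ ^ 2 := by
  have hr : 1 < 1 + θ - θ / 2 := by linarith
  have hdecay : ∫ t, bracketDecay (1 + θ - θ / 2) t ≤ 6 / θ := by
    refine (integral_bracketDecay_le hr).trans ?_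
    rw [div_le_div_iff₀ (by linarith) hθ]
    nlinarith
  calc ∫ t, logHeight t * bracketDecay (1 + θ) t
      ≤ ∫ t, 2 / (θ / 2) * bracketDecay (1 + θ - θ / 2) t :=
        integral_mono (integrable_logHeight_mul_bracketDecay (by linarith))
          ((integrable_bracketDecay hr).const_mul _)
          (logHeight_mul_bracketDecay_le (half_pos hθ) (by linarith) _)
    _ ≤ 2 / (θ / 2) * (6 / θ) := by
        rw [integral_const_mul]
        gcongr
    _ = 24 / θ ^ 2 := by
        field_simp
        norm_num

end Weights

section ZetaGrowth

variable {α : ℝ}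

lemma norm_zetaMulSubOne_le_one_add_sq {t : ℝ} {w : ℂ} (hw : 1 / 4 ≤ w.re) (hw4 : w.re ≤ 4)
    (him : |w.im - t| ≤ 2) : ‖zetaMulSubOne w‖ ≤ 101 * (1 + t ^ 2) := by
  obtain ⟨him1, him2⟩ := abs_le.mp him
  have hnorm : ‖w‖ ^ 2 ≤ 24 * (1 + t ^ 2) := by
    rw [← normSq_eq_norm_sq, normSq_apply]
    nlinarith [sq_nonneg (t - (w.im - t))]
  have hnorm_sub : ‖w - 1‖ ^ 2 ≤ 24 * (1 + t ^ 2) := by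
    rw [← normSq_eq_norm_sq, normSq_apply]
    simp only [sub_re, one_re, sub_im, one_im, sub_zero]
    nlinarith [sq_nonneg (t - (w.im - t))]
  have hinv : 1 / w.re ≤ 4 := by
    rw [div_le_iff₀ (by linarith)]
    linarith
  calc ‖zetaMulSubOne w‖ ≤ ‖w‖ + ‖w‖ * ‖w - 1‖ * (1 / w.re) := by
        rw [mul_one_div]
        exact norm_zetaMulSubOne_le (by linarith)
    _ ≤ ‖w‖ + ‖w‖ * ‖w - 1‖ * 4 := by gcongr
    _ ≤ 101 * (1 + t ^ 2) := by
        nlinarith [sq_nonneg (‖w‖ - 1), sq_nonneg (‖w‖ - ‖w - 1‖), sq_nonneg t]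

lemma exists_norm_zetaMulSubOne_le_exp {c : ℝ} (hc : 0 < c) :
    ∃ A : ℝ, 0 < A ∧ ∀ (t : ℝ) (w : ℂ), 1 / 4 ≤ w.re → w.re ≤ 4 → |w.im - t| ≤ 2 →
      ‖zetaMulSubOne w‖ ≤ Real.exp (A * logHeight t) * c := by
  have hlog : 0 < Real.log (1 + 101 / c) :=
    Real.log_pos (lt_add_of_pos_right 1 (by positivity))
  refine ⟨Real.log (1 + 101 / c) + 1, by linarith, fun t w hw hw4 him => ?_⟩
  calc ‖zetaMulSubOne w‖ ≤ 101 * (1 + t ^ 2) := norm_zetaMulSubOne_le_one_add_sq hw hw4 him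
    _ ≤ (1 + 101 / c) * c * (1 + t ^ 2) := by
        rw [add_mul, one_mul, div_mul_cancel₀ _ hc.ne']
        gcongr
        linarith
    _ ≤ Real.exp (Real.log (1 + 101 / c) * logHeight t) * c * Real.exp (logHeight t) := by
        gcongr
        · rw [← Real.log_le_iff_le_exp (by positivity)]
          exact le_mul_of_one_le_right hlog.le (one_le_logHeight t)
        · exact one_add_sq_le_exp_logHeight t
    _ = Real.exp ((Real.log (1 + 101 / c) + 1) * logHeight t) * c := by
        rw [add_one_mul, Real.exp_add]
        ring

lemma abs_re_sub_re_lt_of_mem_ball {w c : ℂ} {r : ℝ} (hw : w ∈ ball c r) : |w.re - c.re| < r :=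
  (abs_re_le_norm (w - c)).trans_lt (mem_ball_iff_norm.mp hw)

lemma abs_im_sub_im_lt_of_mem_ball {w c : ℂ} {r : ℝ} (hw : w ∈ ball c r) : |w.im - c.im| < r :=
  (abs_im_le_norm (w - c)).trans_lt (mem_ball_iff_norm.mp hw)

lemma exists_norm_zetaMulSubOne_le_exp_mul_norm_two_add (hα : 1 / 2 ≤ α) :
    ∃ A : ℝ, 0 < A ∧ ∀ (t : ℝ), ∀ w ∈ ball (2 + t * I : ℂ) (2 - α),
      ‖zetaMulSubOne w‖ ≤ Real.exp (A * logHeight t) * ‖zetaMulSubOne (2 + t * I)‖ := by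
  obtain ⟨c, hc, hle⟩ := exists_le_norm_zetaMulSubOne one_lt_two
  obtain ⟨A, hA, hexp⟩ := exists_norm_zetaMulSubOne_le_exp hc
  refine ⟨A, hA, fun t w hw => ?_⟩
  have hre := abs_lt.mp (abs_re_sub_re_lt_of_mem_ball hw)
  have him := abs_im_sub_im_lt_of_mem_ball hw
  simp only [add_re, re_ofNat, mul_re, ofReal_re, I_re, mul_zero, ofReal_im, I_im, mul_one,
    sub_self, add_zero, add_im, im_ofNat, mul_im, zero_add] at hre him
  refine (hexp t w (by linarith) (by linarith) (by linarith)).trans ?_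
  gcongr
  exact hle _ (by simp)

lemma zetaMulSubOne_ne_zero_of_mem_ball (hζ : ∀ s : ℂ, α < s.re → riemannZeta s ≠ 0) {t : ℝ}
    {w : ℂ} (hw : w ∈ ball (2 + t * I : ℂ) (2 - α)) : zetaMulSubOne w ≠ 0 := by
  have hre := abs_lt.mp (abs_re_sub_re_lt_of_mem_ball hw)
  simp only [add_re, re_ofNat, mul_re, ofReal_re, I_re, mul_zero, ofReal_im, I_im, mul_one,
    sub_self, add_zero] at hre
  exact zetaMulSubOne_ne_zero (hζ w (by linarith))

lemma mem_closedBall_two_add_im {s : ℂ} {η : ℝ} (hs : α + η ≤ s.re) (hs2 : s.re ≤ 2) :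
    s ∈ closedBall (2 + s.im * I : ℂ) (2 - α - η) := by
  have hsub : s - (2 + s.im * I) = ((s.re - 2 : ℝ) : ℂ) := by
    apply Complex.ext <;> simp
  rw [mem_closedBall_iff_norm, hsub, norm_real, Real.norm_eq_abs, abs_of_nonpos (by linarith)]
  linarith

lemma exists_norm_zetaLogDeriv_le (hα : 1 / 2 ≤ α) (hζ : ∀ s : ℂ, α < s.re → riemannZeta s ≠ 0)
    {η : ℝ} (hη : 0 < η) (hη2 : α + η ≤ 2) :
    ∃ C : ℝ, 0 < C ∧ ∀ s : ℂ, α + η ≤ s.re → s.re ≤ 2 →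
      ‖zetaLogDeriv s‖ ≤ C * logHeight s.im := by
  obtain ⟨A, hA, hle⟩ := exists_norm_zetaMulSubOne_le_exp_mul_norm_two_add hα
  refine ⟨4 * (2 - α + (2 - α - η)) / (2 - α - (2 - α - η)) ^ 2 * A, ?_, fun s hs hs2 => ?_⟩
  · rw [sub_sub_cancel]
    have : 0 < 2 - α + (2 - α - η) := by linarith
    positivity
  · rw [mul_assoc]
    exact norm_logDeriv_le_of_ne_zero (mul_pos hA (zero_lt_one.trans_le (one_le_logHeight _)))
      differentiable_zetaMulSubOne.differentiableOn
      (fun w => zetaMulSubOne_ne_zero_of_mem_ball hζ) (hle s.im) (by linarith)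
      (mem_closedBall_two_add_im hs hs2)

lemma exists_exp_le_norm_zetaMulSubOne (hα : 1 / 2 ≤ α)
    (hζ : ∀ s : ℂ, α < s.re → riemannZeta s ≠ 0) {η : ℝ} (hη : 0 < η) :
    ∃ C : ℝ, ∀ s : ℂ, α + η ≤ s.re → s.re ≤ 2 →
      Real.exp (-(C * logHeight s.im)) ≤ ‖zetaMulSubOne s‖ := by
  obtain ⟨A, hA, hle⟩ := exists_norm_zetaMulSubOne_le_exp_mul_norm_two_add hα
  obtain ⟨c, hc, hcle⟩ := exists_le_norm_zetaMulSubOne one_lt_two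
  set D := 2 * (2 - α - η) / (2 - α - (2 - α - η)) * A
  refine ⟨D + |Real.log c|, fun s hs hs2 => ?_⟩
  have hL := one_le_logHeight s.im
  have hcexp : Real.exp (-(|Real.log c| * logHeight s.im)) ≤ ‖zetaMulSubOne (2 + s.im * I)‖ := by
    refine le_trans ?_ (hcle _ (by simp))
    rw [← Real.le_log_iff_exp_le hc]
    nlinarith [neg_abs_le (Real.log c), abs_nonneg (Real.log c)]
  calc Real.exp (-((D + |Real.log c|) * logHeight s.im))
      = Real.exp (-(2 * (2 - α - η) / (2 - α - (2 - α - η)) * (A * logHeight s.im))) *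
          Real.exp (-(|Real.log c| * logHeight s.im)) := by
        rw [← Real.exp_add]
        congr 1
        ring
    _ ≤ Real.exp (-(2 * (2 - α - η) / (2 - α - (2 - α - η)) * (A * logHeight s.im))) *
          ‖zetaMulSubOne (2 + s.im * I)‖ := by gcongr
    _ ≤ ‖zetaMulSubOne s‖ :=
        exp_mul_norm_le_of_ne_zero (mul_pos hA (by linarith))
          differentiable_zetaMulSubOne.differentiableOn
          (fun w => zetaMulSubOne_ne_zero_of_mem_ball hζ) (hle s.im) (by linarith)
          (mem_closedBall_two_add_im hs hs2)

lemma exists_neg_mul_logHeight_le_re_zetaLogDeriv_near (hα : 1 / 2 ≤ α) (hα1 : α ≤ 1)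
    (hζ : ∀ s : ℂ, α < s.re → riemannZeta s ≠ 0) :
    ∃ C : ℝ, 0 < C ∧ ∀ s : ℂ, α < s.re → s.re ≤ α + 1 / 20 →
      -(C * logHeight s.im) ≤ (zetaLogDeriv s).re := by
  obtain ⟨A, hA, hle⟩ := exists_norm_zetaMulSubOne_le_exp one_pos
  obtain ⟨B, hB⟩ := exists_exp_le_norm_zetaMulSubOne hα hζ (η := 1 / 20) (by norm_num)
  refine ⟨240 * (A + |B|), by positivity, fun s hs hs2 => ?_⟩
  have hL : 0 < logHeight s.im := zero_lt_one.trans_le (one_le_logHeight s.im)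
  set c : ℂ := ⟨α + 1 / 20, s.im⟩
  have hcre : c.re = α + 1 / 20 := rfl
  have hc : Real.exp (-(|B| * logHeight s.im)) ≤ ‖zetaMulSubOne c‖ := by
    refine le_trans ?_ (hB c le_rfl (by linarith))
    gcongr
    exact le_abs_self B
  have hgrowth : ∀ w ∈ closedBall c (3 * (1 / 10)),
      ‖zetaMulSubOne w‖ ≤ Real.exp ((A + |B|) * logHeight s.im) * ‖zetaMulSubOne c‖ := by
    intro w hw
    have hnorm := mem_closedBall_iff_norm.mp hw
    obtain ⟨hre1, hre2⟩ := abs_le.mp ((abs_re_le_norm (w - c)).trans hnorm)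
    have him : |w.im - s.im| ≤ _ := (abs_im_le_norm (w - c)).trans hnorm
    rw [sub_re] at hre1 hre2
    calc ‖zetaMulSubOne w‖ ≤ Real.exp (A * logHeight s.im) * 1 :=
          hle s.im w (by linarith) (by linarith) (by linarith)
      _ = Real.exp ((A + |B|) * logHeight s.im) * Real.exp (-(|B| * logHeight s.im)) := by
          rw [← Real.exp_add, mul_one]
          congr 1
          ring
      _ ≤ _ := by gcongr
  have hsc : s ∈ closedBall c (1 / 10 / 2) := by
    have hsub : s - c = ((s.re - (α + 1 / 20) : ℝ) : ℂ) := by apply Complex.ext <;> simp [c]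
    rw [mem_closedBall_iff_norm, hsub, norm_real, Real.norm_eq_abs, abs_le]
    constructor <;> linarith
  have hbound := neg_mul_le_re_logDeriv (by norm_num) differentiable_zetaMulSubOne.diffContOnCl
    (norm_pos_iff.mp ((Real.exp_pos _).trans_le hc)) (by positivity) hgrowth hsc
    fun a _ ha => not_le.mp fun h =>
      zetaMulSubOne_ne_zero (hζ a (hs.trans_le h)) ha
  exact le_trans (by linarith) hbound

lemma exists_neg_mul_logHeight_le_re_zetaLogDeriv (hα : 1 / 2 ≤ α) (hα1 : α ≤ 1)
    (hζ : ∀ s : ℂ, α < s.re → riemannZeta s ≠ 0) :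
    ∃ C : ℝ, 0 < C ∧ ∀ s : ℂ, α < s.re → s.re ≤ 2 →
      -(C * logHeight s.im) ≤ (zetaLogDeriv s).re := by
  obtain ⟨C, hC, hnear⟩ := exists_neg_mul_logHeight_le_re_zetaLogDeriv_near hα hα1 hζ
  obtain ⟨D, hD, hfar⟩ := exists_norm_zetaLogDeriv_le hα hζ (η := 1 / 20) (by norm_num)
    (by linarith)
  refine ⟨C + D, by positivity, fun s hs hs2 => ?_⟩
  have hL := one_le_logHeight s.im
  rcases le_total s.re (α + 1 / 20) with h | h
  · nlinarith [hnear s hs h]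
  · nlinarith [(abs_le.mp ((abs_re_le_norm _).trans (hfar s h hs2))).1]

end ZetaGrowth

section VerticalLines

variable {H : ℂ → ℂ} {w : ℝ → ℝ} {a b : ℝ}

lemma continuous_vertical (hc : ∀ s : ℂ, s.re = a → ContinuousAt H s) :
    Continuous fun t : ℝ => H (a + t * I) :=
  continuous_iff_continuousAt.mpr fun t =>
    ContinuousAt.comp (f := fun t : ℝ => (a : ℂ) + t * I) (hc _ (by simp)) (by fun_prop)

lemma integrable_vertical (hw : Integrable w) (hc : ∀ s : ℂ, s.re = a → ContinuousAt H s)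
    (hle : ∀ s : ℂ, s.re = a → ‖H s‖ ≤ w s.im) : Integrable fun t : ℝ => H (a + t * I) :=
  hw.mono' (continuous_vertical hc).aestronglyMeasurable
    (.of_forall fun t => by simpa using hle (a + t * I) (by simp))

lemma tendsto_integral_horizontal (hab : a ≤ b) {l : Filter ℝ} (hw0 : Tendsto w l (𝓝 0))
    (hle : ∀ s : ℂ, a ≤ s.re → s.re ≤ b → ‖H s‖ ≤ w s.im) :
    Tendsto (fun T : ℝ => ∫ x : ℝ in a..b, H (x + T * I)) l (𝓝 0) := by
  refine squeeze_zero_norm (a := fun T => w T * |b - a|) (fun T => ?_)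
    (by simpa using hw0.mul_const |b - a|)
  refine intervalIntegral.norm_integral_le_of_norm_le_const fun x hx => ?_
  rw [uIoc_of_le hab] at hx
  simpa using hle (x + T * I) (by simpa using hx.1.le) (by simpa using hx.2)

lemma integral_vertical_eq (hab : a ≤ b) (hw : Integrable w)
    (hw0 : Tendsto w (cocompact ℝ) (𝓝 0))
    (hd : ∀ s : ℂ, a ≤ s.re → s.re ≤ b → DifferentiableAt ℂ H s)
    (hle : ∀ s : ℂ, a ≤ s.re → s.re ≤ b → ‖H s‖ ≤ w s.im) :
    ∫ t : ℝ, H (a + t * I) = ∫ t : ℝ, H (b + t * I) := by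
  have htendsto : ∀ c ∈ Icc a b,
      Tendsto (fun T : ℝ => ∫ y : ℝ in -T..T, H (c + y * I)) atTop (𝓝 (∫ t : ℝ, H (c + t * I))) :=
    fun c hc => intervalIntegral_tendsto_integral
      (integrable_vertical hw (fun s hs => (hd s (hs ▸ hc.1) (hs ▸ hc.2)).continuousAt)
        fun s hs => hle s (hs ▸ hc.1) (hs ▸ hc.2)) tendsto_neg_atTop_atBot tendsto_id
  have hrect : ∀ T : ℝ,
      (∫ y : ℝ in -T..T, H (b + y * I)) - (∫ y : ℝ in -T..T, H (a + y * I)) =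
        I * ((∫ x : ℝ in a..b, H (x + (-T : ℝ) * I)) - ∫ x : ℝ in a..b, H (x + T * I)) := by
    intro T
    have hzero := integral_boundary_rect_eq_zero_of_differentiableOn H ⟨a, -T⟩ ⟨b, T⟩
      fun s hs => by
        rw [mem_reProdIm, uIcc_of_le hab] at hs
        exact (hd s hs.1.1 hs.1.2).differentiableWithinAt
    simp only [smul_eq_mul] at hzero
    linear_combination (-I) * hzero +
      ((∫ y : ℝ in -T..T, H (b + y * I)) - (∫ y : ℝ in -T..T, H (a + y * I))) * I_sq
  have hlim := ((tendsto_integral_horizontal hab (hw0.mono_left atBot_le_cocompact) hle).comp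
    tendsto_neg_atTop_atBot).sub
      (tendsto_integral_horizontal hab (hw0.mono_left atTop_le_cocompact) hle)
  have hzero := hlim.const_mul I
  rw [sub_zero, mul_zero] at hzero
  exact (sub_eq_zero.mp (tendsto_nhds_unique (((htendsto b ⟨hab, le_rfl⟩).sub
    (htendsto a ⟨le_rfl, hab⟩)).congr hrect) hzero)).symm

variable {α σ r M : ℝ} {K : ℂ → ℂ}

lemma exists_norm_zetaLogDeriv_mul_le (hα : 1 / 2 ≤ α) (hζ : ∀ s : ℂ, α < s.re → riemannZeta s ≠ 0)
    (hσ : α < σ) (hσ2 : σ ≤ 2) (M r : ℝ) :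
    ∃ C : ℝ, ∀ s k : ℂ, σ ≤ s.re → s.re ≤ 2 → ‖k‖ ≤ M * bracketDecay r s.im →
      ‖zetaLogDeriv s * k‖ ≤ C * (logHeight s.im * bracketDecay r s.im) := by
  obtain ⟨C, hC, hGC⟩ := exists_norm_zetaLogDeriv_le hα hζ (sub_pos.mpr hσ) (by linarith)
  refine ⟨C * M, fun s k hs hs2 hk => ?_⟩
  rw [norm_mul, mul_mul_mul_comm]
  exact mul_le_mul (hGC s (by linarith) hs2) hk (norm_nonneg _)
    (mul_nonneg hC.le (zero_le_one.trans (one_le_logHeight _)))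

lemma integrable_zetaLogDeriv_mul (hα : 1 / 2 ≤ α) (hζ : ∀ s : ℂ, α < s.re → riemannZeta s ≠ 0)
    (hσ : α < σ) (hσ2 : σ ≤ 2) (hr : 1 < r) (hc : ∀ s : ℂ, s.re = σ → ContinuousAt K s)
    (hle : ∀ s : ℂ, s.re = σ → ‖K s‖ ≤ M * bracketDecay r s.im) :
    Integrable fun t : ℝ => zetaLogDeriv (σ + t * I) * K (σ + t * I) := by
  obtain ⟨C, hC⟩ := exists_norm_zetaLogDeriv_mul_le hα hζ hσ hσ2 M r
  exact integrable_vertical (H := fun s => zetaLogDeriv s * K s)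
    ((integrable_logHeight_mul_bracketDecay hr).const_mul C)
    (fun s hs => (differentiableAt_zetaLogDeriv (hζ s (hs ▸ hσ))).continuousAt.mul (hc s hs))
    fun s hs => hC s (K s) hs.ge (hs ▸ hσ2) (hle s hs)

lemma integral_zetaLogDeriv_mul_eq (hα : 1 / 2 ≤ α)
    (hζ : ∀ s : ℂ, α < s.re → riemannZeta s ≠ 0) (hσ : α < σ) (hσb : σ ≤ b) (hb : b ≤ 2)
    (hr : 1 < r) (hd : ∀ s : ℂ, σ ≤ s.re → s.re ≤ b → DifferentiableAt ℂ K s)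
    (hle : ∀ s : ℂ, σ ≤ s.re → s.re ≤ b → ‖K s‖ ≤ M * bracketDecay r s.im) :
    ∫ t : ℝ, zetaLogDeriv (σ + t * I) * K (σ + t * I) =
      ∫ t : ℝ, zetaLogDeriv (b + t * I) * K (b + t * I) := by
  obtain ⟨C, hC⟩ := exists_norm_zetaLogDeriv_mul_le hα hζ hσ (hσb.trans hb) M r
  exact integral_vertical_eq (H := fun s => zetaLogDeriv s * K s)
    (w := fun t => C * (logHeight t * bracketDecay r t)) hσb
    ((integrable_logHeight_mul_bracketDecay hr).const_mul C)
    (by simpa using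
      (tendsto_logHeight_mul_bracketDecay_cocompact (zero_lt_one.trans hr)).const_mul C)
    (fun s hs hsb => (differentiableAt_zetaLogDeriv (hζ s (hσ.trans_le hs))).mul (hd s hs hsb))
    fun s hs hsb => hC s (K s) hs (hsb.trans hb) (hle s hs hsb)

end VerticalLines

section MeanValue

/-- The holomorphic function `(1 - (s - σ)²)^(-r/2)`, which agrees with the weight `⟨t⟩⁻ʳ` on the
line `Re s = σ`. -/
noncomputable def shiftedWeight (σ r : ℝ) (s : ℂ) : ℂ := (1 - (s - σ) ^ 2) ^ ((-r / 2 : ℝ) : ℂ)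

variable {σ r : ℝ} {s : ℂ}

lemma shiftedWeight_vertical (σ r t : ℝ) :
    shiftedWeight σ r (σ + t * I) = bracketDecay r t := by
  rw [shiftedWeight, bracketDecay, ofReal_cpow (by positivity)]
  congr 1
  push_cast
  linear_combination -(t : ℂ) ^ 2 * I_sq

lemma le_re_one_sub_sq (hs : (s.re - σ) ^ 2 ≤ 1 / 2) :
    (1 + s.im ^ 2) / 2 ≤ (1 - (s - σ) ^ 2).re := by
  have hre : (1 - (s - σ) ^ 2).re = 1 - ((s.re - σ) ^ 2 - s.im ^ 2) := by simp [pow_two]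
  rw [hre]
  linarith [sq_nonneg s.im]

lemma differentiableAt_shiftedWeight (r : ℝ) (hs : (s.re - σ) ^ 2 ≤ 1 / 2) :
    DifferentiableAt ℂ (shiftedWeight σ r) s :=
  DifferentiableAt.cpow_const (by fun_prop)
    (.inl (lt_of_lt_of_le (by positivity) (le_re_one_sub_sq hs)))

lemma norm_shiftedWeight_le (hr : 0 ≤ r) (hr2 : r ≤ 2) (hs : (s.re - σ) ^ 2 ≤ 1 / 2) :
    ‖shiftedWeight σ r s‖ ≤ 2 * bracketDecay r s.im := by
  rw [shiftedWeight, norm_cpow_real]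
  calc ‖1 - (s - σ) ^ 2‖ ^ (-r / 2) ≤ ((1 + s.im ^ 2) / 2) ^ (-r / 2) :=
        Real.rpow_le_rpow_of_nonpos (by positivity)
          ((le_re_one_sub_sq hs).trans (re_le_norm _)) (by linarith)
    _ = 2 ^ (r / 2) * bracketDecay r s.im := by
        rw [Real.div_rpow (by positivity) zero_le_two, bracketDecay, neg_div,
          Real.rpow_neg zero_le_two, div_inv_eq_mul, mul_comm]
    _ ≤ 2 * bracketDecay r s.im := by
        gcongr
        · exact (bracketDecay_pos _ _).le
        · exact Real.rpow_le_self_of_one_le one_le_two (by linarith)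

variable {α : ℝ}

lemma integrable_zetaLogDeriv_mul_bracketDecay (hα : 1 / 2 ≤ α)
    (hζ : ∀ s : ℂ, α < s.re → riemannZeta s ≠ 0) (hσ : α < σ) (hσ2 : σ ≤ 2) (hr : 1 < r)
    (hr2 : r ≤ 2) :
    Integrable fun t : ℝ => zetaLogDeriv (σ + t * I) * bracketDecay r t := by
  simp_rw [← shiftedWeight_vertical σ]
  have hsq : ∀ s : ℂ, s.re = σ → (s.re - σ) ^ 2 ≤ 1 / 2 := fun s hs => by simp [hs]
  exact integrable_zetaLogDeriv_mul hα hζ hσ hσ2 hr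
    (fun s hs => (differentiableAt_shiftedWeight _ (hsq s hs)).continuousAt)
    fun s hs => norm_shiftedWeight_le (by linarith) hr2 (hsq s hs)

lemma exists_norm_integral_zetaLogDeriv_mul_bracketDecay_le (hα : 1 / 2 ≤ α)
    (hζ : ∀ s : ℂ, α < s.re → riemannZeta s ≠ 0) :
    ∃ C : ℝ, 0 < C ∧ ∀ θ σ : ℝ, 0 < θ → θ ≤ 1 → α < σ → σ ≤ 1 →
      ‖∫ t : ℝ, zetaLogDeriv (σ + t * I) * bracketDecay (1 + θ) t‖ ≤ C / θ := by
  obtain ⟨B, hB, hGB⟩ := exists_norm_zetaLogDeriv_le_of_one_lt (b := 6 / 5) (by norm_num)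
  refine ⟨8 * B, by positivity, fun θ σ hθ hθ1 hσ hσ1 => ?_⟩
  have hsq : (6 / 5 - σ) ^ 2 ≤ 1 / 2 := by nlinarith
  have hsq' : ∀ s : ℂ, σ ≤ s.re → s.re ≤ 6 / 5 → (s.re - σ) ^ 2 ≤ 1 / 2 := fun s hs hs2 => by
    nlinarith
  simp_rw [← shiftedWeight_vertical σ]
  rw [integral_zetaLogDeriv_mul_eq hα hζ hσ (b := 6 / 5) (by linarith) (by norm_num)
    (show 1 < 1 + θ by linarith)
    (fun s hs hs2 => differentiableAt_shiftedWeight _ (hsq' s hs hs2))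
    fun s hs hs2 => norm_shiftedWeight_le (by linarith) (by linarith) (hsq' s hs hs2)]
  calc _ ≤ ∫ t : ℝ, B * 2 * bracketDecay (1 + θ) t := by
        refine norm_integral_le_of_norm_le
          ((integrable_bracketDecay (by linarith)).const_mul _) (.of_forall fun t => ?_)
        rw [norm_mul, mul_assoc B]
        have hVt := norm_shiftedWeight_le (σ := σ) (r := 1 + θ) (s := (6 / 5 : ℝ) + t * I)
          (by linarith) (by linarith) (by simpa using hsq)
        rw [show (((6 / 5 : ℝ) : ℂ) + t * I).im = t by simp] at hVt
        exact mul_le_mul (hGB _ (by simp)) hVt (norm_nonneg _) hB.le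
    _ ≤ B * 2 * (2 * (1 + θ) / (1 + θ - 1)) := by
        rw [integral_const_mul]
        gcongr
        exact integral_bracketDecay_le (by linarith)
    _ ≤ 8 * B / θ := by
        rw [add_sub_cancel_left, ← mul_div_assoc]
        refine div_le_div_of_nonneg_right ?_ hθ.le
        nlinarith

/-- A lower bound for the real part turns the bound for its mean into one for the mean of its
absolute value. -/
lemma exists_integral_abs_re_zetaLogDeriv_mul_bracketDecay_le (hα : 1 / 2 ≤ α) (hα1 : α ≤ 1)
    (hζ : ∀ s : ℂ, α < s.re → riemannZeta s ≠ 0) :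
    ∃ C : ℝ, 0 < C ∧ ∀ θ σ : ℝ, 0 < θ → θ ≤ 1 → α < σ → σ ≤ 1 →
      ∫ t : ℝ, |(zetaLogDeriv (σ + t * I)).re| * bracketDecay (1 + θ) t ≤ C / θ ^ 2 := by
  obtain ⟨B, hB, hmean⟩ := exists_norm_integral_zetaLogDeriv_mul_bracketDecay_le hα hζ
  obtain ⟨C, hC, hlower⟩ := exists_neg_mul_logHeight_le_re_zetaLogDeriv hα hα1 hζ
  refine ⟨B + 2 * C * 24, by positivity, fun θ σ hθ hθ1 hσ hσ1 => ?_⟩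
  have hint := integrable_zetaLogDeriv_mul_bracketDecay hα hζ hσ (by linarith)
    (r := 1 + θ) (by linarith) (by linarith)
  have hint_re : Integrable fun t : ℝ =>
    (zetaLogDeriv (σ + t * I) * bracketDecay (1 + θ) t).re := hint.re
  have hL := integrable_logHeight_mul_bracketDecay (r := 1 + θ) (by linarith)
  have hre : ∀ t : ℝ, (zetaLogDeriv (σ + t * I)).re * bracketDecay (1 + θ) t =
      (zetaLogDeriv (σ + t * I) * bracketDecay (1 + θ) t).re := fun t =>
    (re_mul_ofReal _ _).symm
  have hpoint : ∀ t : ℝ, |(zetaLogDeriv (σ + t * I)).re| * bracketDecay (1 + θ) t ≤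
      (zetaLogDeriv (σ + t * I) * bracketDecay (1 + θ) t).re +
        2 * C * (logHeight t * bracketDecay (1 + θ) t) := by
    intro t
    have hlow : -(C * logHeight t) ≤ (zetaLogDeriv (σ + t * I)).re := by
      simpa using hlower (σ + t * I) (by simpa using hσ) (by simp; linarith)
    have hpos : 0 ≤ C * logHeight t := mul_nonneg hC.le (zero_le_one.trans (one_le_logHeight t))
    rw [← hre, ← mul_assoc, ← add_mul]
    refine mul_le_mul_of_nonneg_right ?_ (bracketDecay_pos _ t).le
    exact abs_le.mpr ⟨by linarith, by linarith⟩
  calc ∫ t : ℝ, |(zetaLogDeriv (σ + t * I)).re| * bracketDecay (1 + θ) t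
      ≤ ∫ t : ℝ, ((zetaLogDeriv (σ + t * I) * bracketDecay (1 + θ) t).re +
          2 * C * (logHeight t * bracketDecay (1 + θ) t)) :=
        integral_mono_of_nonneg (.of_forall fun t => mul_nonneg (abs_nonneg _)
          (bracketDecay_pos _ t).le) (hint_re.add (hL.const_mul _)) (.of_forall hpoint)
    _ = (∫ t : ℝ, zetaLogDeriv (σ + t * I) * bracketDecay (1 + θ) t).re +
          2 * C * ∫ t : ℝ, logHeight t * bracketDecay (1 + θ) t := by
        rw [integral_add hint_re (hL.const_mul _), integral_const_mul]
        congr 1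
        exact integral_re hint
    _ ≤ B / θ + 2 * C * (24 / θ ^ 2) := by
        gcongr
        · exact (re_le_norm _).trans (hmean θ σ hθ hθ1 hσ hσ1)
        · exact integral_logHeight_mul_bracketDecay_le hθ hθ1
    _ ≤ (B + 2 * C * 24) / θ ^ 2 := by
        rw [add_div, ← mul_div_assoc]
        gcongr
        exact pow_le_of_le_one hθ.le hθ1 two_ne_zero

end MeanValue

section Kernel

/-- The kernel `X^(s+1) / (s (s + 1))`, whose inverse Mellin transform along a vertical line is the
ramp `X ↦ max (X - 1) 0`; it produces the integral of `ψ`. -/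
noncomputable def rieszKernel (X : ℝ) (s : ℂ) : ℂ := (X : ℂ) ^ (s + 1) / (s * (s + 1))

/-- The difference quotient of `rieszKernel` between `x` and `x + h`; it produces the mean of `ψ`
over `[x, x + h]`. -/
noncomputable def rieszQuotient (x h : ℝ) (s : ℂ) : ℂ :=
  (rieszKernel (x + h) s - rieszKernel x s) / h

variable {X x h d θ : ℝ} {s : ℂ}

lemma differentiableAt_rieszKernel (hX : 0 < X) (hs : 0 < s.re) :
    DifferentiableAt ℂ (rieszKernel X) s := by
  have hs0 : s ≠ 0 := by rintro rfl; simp at hs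
  have hs1 : s + 1 ≠ 0 := fun h => by
    have := congrArg re h
    simp only [add_re, one_re, zero_re] at this
    linarith
  exact (DifferentiableAt.const_cpow (by fun_prop) (.inl (ofReal_ne_zero.mpr hX.ne'))).div
    (by fun_prop) (mul_ne_zero hs0 hs1)

lemma differentiableAt_rieszQuotient (hx : 0 < x) (hh : 0 < h) (hs : 0 < s.re) :
    DifferentiableAt ℂ (rieszQuotient x h) s :=
  ((differentiableAt_rieszKernel (add_pos hx hh) hs).sub
    (differentiableAt_rieszKernel hx hs)).div_const _

lemma rieszKernel_conj (hX : 0 ≤ X) (s : ℂ) :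
    rieszKernel X (starRingEnd ℂ s) = starRingEnd ℂ (rieszKernel X s) := by
  have harg : (X : ℂ).arg ≠ Real.pi := by
    rw [arg_ofReal_of_nonneg hX]
    exact Real.pi_pos.ne
  have hcpow := cpow_conj (X : ℂ) (s + 1) harg
  rw [map_add, map_one, conj_ofReal] at hcpow
  rw [rieszKernel, rieszKernel, hcpow, map_div₀, map_mul, map_add, map_one]

lemma rieszQuotient_conj (hx : 0 ≤ x) (hh : 0 ≤ h) (s : ℂ) :
    rieszQuotient x h (starRingEnd ℂ s) = starRingEnd ℂ (rieszQuotient x h s) := by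
  rw [rieszQuotient, rieszQuotient, rieszKernel_conj hx, rieszKernel_conj (add_nonneg hx hh),
    map_div₀, map_sub, conj_ofReal]

lemma mul_sqrt_one_add_sq_le_norm (hd : 0 ≤ d) (hd1 : d ≤ 1) (hs : d ≤ s.re) :
    d * √(1 + s.im ^ 2) ≤ ‖s‖ := by
  rw [← sq_le_sq₀ (by positivity) (norm_nonneg _), mul_pow, Real.sq_sqrt (by positivity),
    ← normSq_eq_norm_sq, normSq_apply]
  nlinarith [mul_nonneg (sub_nonneg.mpr (pow_le_one₀ hd hd1 (n := 2))) (sq_nonneg s.im)]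

lemma norm_rieszKernel_le (hX : 0 < X) (hd : 0 < d) (hd1 : d ≤ 1) (hs : d ≤ s.re) :
    ‖rieszKernel X s‖ ≤ X ^ (s.re + 1) / d * bracketDecay 2 s.im := by
  have hnorm := mul_sqrt_one_add_sq_le_norm hd.le hd1 hs
  have hnorm' : 1 * √(1 + s.im ^ 2) ≤ ‖s + 1‖ := by
    simpa using mul_sqrt_one_add_sq_le_norm zero_le_one le_rfl
      (show 1 ≤ (s + 1).re by rw [add_re, one_re]; linarith)
  have hprod : d * (1 + s.im ^ 2) ≤ ‖s‖ * ‖s + 1‖ := by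
    calc d * (1 + s.im ^ 2) = d * √(1 + s.im ^ 2) * (1 * √(1 + s.im ^ 2)) := by
          rw [one_mul, mul_assoc, Real.mul_self_sqrt (by positivity)]
      _ ≤ ‖s‖ * ‖s + 1‖ := by gcongr
  rw [rieszKernel, norm_div, norm_mul, norm_cpow_eq_rpow_re_of_pos hX, bracketDecay_two,
    ← div_eq_mul_inv, div_div]
  exact div_le_div_of_nonneg_left (by positivity) (by positivity) hprod

lemma norm_rieszQuotient_le_bracketDecay_two (hh : 0 < h) (hhx : h ≤ x) (hd : 0 < d)
    (hd1 : d ≤ 1) (hs : d ≤ s.re) :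
    ‖rieszQuotient x h s‖ ≤ 2 * (2 * x) ^ (s.re + 1) / (d * h) * bracketDecay 2 s.im := by
  have hx : 0 < x := hh.trans_le hhx
  have hkernel : ∀ X, 0 < X → X ≤ 2 * x →
      ‖rieszKernel X s‖ ≤ (2 * x) ^ (s.re + 1) / d * bracketDecay 2 s.im := fun X hX hX2 => by
    refine (norm_rieszKernel_le hX hd hd1 hs).trans ?_
    have := bracketDecay_pos 2 s.im
    gcongr
    linarith
  rw [rieszQuotient, norm_div, norm_real, Real.norm_of_nonneg hh.le, div_le_iff₀ hh]
  refine (norm_sub_le _ _).trans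
    ((add_le_add (hkernel _ (by linarith) (by linarith)) (hkernel x hx (by linarith))).trans_eq ?_)
  field_simp
  ring

lemma norm_cpow_sub_cpow_le (hx : 0 < x) (hh : 0 ≤ h) (hhx : h ≤ x) (hs : 0 < s.re) :
    ‖((x + h : ℝ) : ℂ) ^ (s + 1) / (s + 1) - (x : ℂ) ^ (s + 1) / (s + 1)‖ ≤
      (2 * x) ^ s.re * h := by
  have hs1 : s ≠ -1 := by rintro rfl; norm_num at hs
  have hmean := norm_image_sub_le_of_norm_deriv_le_segment' (a := x) (b := x + h)
    (f := fun y : ℝ => (y : ℂ) ^ (s + 1) / (s + 1)) (f' := fun y : ℝ => (y : ℂ) ^ s)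
    (C := (2 * x) ^ s.re)
    (fun y hy => (hasDerivAt_ofReal_cpow_const' (by linarith [hy.1]) hs1).hasDerivWithinAt)
    (fun y hy => by
      rw [norm_cpow_eq_rpow_re_of_pos (by linarith [hy.1])]
      exact Real.rpow_le_rpow (by linarith [hy.1]) (by linarith [hy.2]) hs.le)
    (x + h) (right_mem_Icc.mpr (by linarith))
  rwa [add_sub_cancel_left] at hmean

lemma norm_rieszQuotient_le_bracketDecay_one (hh : 0 < h) (hhx : h ≤ x) (hs : 1 / 2 ≤ s.re) :
    ‖rieszQuotient x h s‖ ≤ 2 * (2 * x) ^ s.re * bracketDecay 1 s.im := by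
  have hx : 0 < x := hh.trans_le hhx
  have hs0 : s ≠ 0 := by rintro rfl; norm_num at hs
  have hfactor : rieszQuotient x h s =
      (((x + h : ℝ) : ℂ) ^ (s + 1) / (s + 1) - (x : ℂ) ^ (s + 1) / (s + 1)) / (s * h) := by
    have : (h : ℂ) ≠ 0 := ofReal_ne_zero.mpr hh.ne'
    rw [rieszQuotient, rieszKernel, rieszKernel]
    field_simp
  have hnorm := mul_sqrt_one_add_sq_le_norm (by norm_num) (by norm_num) hs
  have hdecay : bracketDecay 1 s.im = (√(1 + s.im ^ 2))⁻¹ := by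
    rw [bracketDecay, Real.sqrt_eq_rpow, ← Real.rpow_neg (by positivity), neg_div]
  rw [hfactor, norm_div, norm_mul, norm_real, Real.norm_of_nonneg hh.le]
  calc _ ≤ (2 * x) ^ s.re * h / (1 / 2 * √(1 + s.im ^ 2) * h) := by
        gcongr
        exact norm_cpow_sub_cpow_le hx hh.le hhx (by linarith)
    _ = 2 * (2 * x) ^ s.re * bracketDecay 1 s.im := by
        rw [hdecay]
        field_simp

/-- Interpolation between the decay rates `⟨t⟩⁻¹` and `⟨t⟩⁻²`, through `min 1 q ≤ q ^ θ`. -/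
lemma norm_rieszQuotient_le (hh : 0 < h) (hhx : h ≤ x) (hθ : 0 ≤ θ) (hθ1 : θ ≤ 1)
    (hs : 1 / 2 ≤ s.re) :
    ‖rieszQuotient x h s‖ ≤ 8 * (2 * x) ^ s.re * (x / h) ^ θ * bracketDecay (1 + θ) s.im := by
  have hx : 0 < x := hh.trans_le hhx
  have hdecay := bracketDecay_pos 1 s.im
  set q := x / h * bracketDecay 1 s.im
  have hq : 0 < q := by positivity
  have hone : ‖rieszQuotient x h s‖ ≤ 8 * (2 * x) ^ s.re * bracketDecay 1 s.im := by
    refine (norm_rieszQuotient_le_bracketDecay_one hh hhx hs).trans ?_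
    gcongr
    norm_num
  have htwo : ‖rieszQuotient x h s‖ ≤ 8 * (2 * x) ^ s.re * bracketDecay 1 s.im * q := by
    refine (norm_rieszQuotient_le_bracketDecay_two hh hhx (by norm_num) (by norm_num)
      hs).trans_eq ?_
    rw [show (2 : ℝ) = 1 + 1 by norm_num, bracketDecay_add, Real.rpow_add_one (by positivity)]
    simp only [q]
    field_simp
    ring
  have hqθ : q ^ θ = (x / h) ^ θ * bracketDecay θ s.im := by
    rw [Real.mul_rpow (by positivity) hdecay.le, bracketDecay, ← Real.rpow_mul (by positivity),
      bracketDecay]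
    ring_nf
  calc ‖rieszQuotient x h s‖ ≤ 8 * (2 * x) ^ s.re * bracketDecay 1 s.im * q ^ θ := by
        rcases le_total 1 q with hq1 | hq1
        · exact hone.trans (le_mul_of_one_le_right (by positivity) (Real.one_le_rpow hq1 hθ))
        · exact htwo.trans (by gcongr; exact Real.self_le_rpow_of_le_one hq.le hq1 hθ1)
    _ = _ := by
        rw [hqθ, bracketDecay_add]
        ring

end Kernel

section MainIntegral

/-- Replacing `g` by `2 Re g` costs the integral of `g` against the conjugate kernel. -/
lemma integral_mul_eq_integral_two_mul_re_mul_sub {Y : Type*} [MeasurableSpace Y] {μ : Measure Y}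
    {g k : Y → ℂ} (hk : Integrable (fun y => g y * k y) μ)
    (hkc : Integrable (fun y => g y * starRingEnd ℂ (k y)) μ) :
    ∫ y, g y * k y ∂μ =
      ∫ y, 2 * ((g y).re : ℂ) * k y ∂μ -
        starRingEnd ℂ (∫ y, g y * starRingEnd ℂ (k y) ∂μ) := by
  have hconj : Integrable (fun y => starRingEnd ℂ (g y * starRingEnd ℂ (k y))) μ :=
    conjLIE.toContinuousLinearEquiv.integrable_comp_iff.mpr hkc
  rw [eq_sub_iff_add_eq, ← integral_conj, ← integral_add hk hconj]
  congr 1 with y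
  rw [map_mul, conj_conj, ← add_mul, add_conj]
  push_cast
  ring

variable {α σ x h : ℝ}

lemma integrable_abs_re_zetaLogDeriv_mul_bracketDecay {r : ℝ} (hα : 1 / 2 ≤ α)
    (hζ : ∀ s : ℂ, α < s.re → riemannZeta s ≠ 0) (hσ : α < σ) (hσ2 : σ ≤ 2) (hr : 1 < r)
    (hr2 : r ≤ 2) :
    Integrable fun t : ℝ => |(zetaLogDeriv (σ + t * I)).re| * bracketDecay r t := by
  have hre : Integrable fun t : ℝ => (zetaLogDeriv (σ + t * I) * bracketDecay r t).re :=
    (integrable_zetaLogDeriv_mul_bracketDecay hα hζ hσ hσ2 hr hr2).re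
  refine hre.abs.congr (.of_forall fun t => ?_)
  simp only [re_mul_ofReal, abs_mul, abs_of_pos (bracketDecay_pos r t)]

lemma exists_norm_integral_two_mul_re_zetaLogDeriv_mul_rieszQuotient_le (hα : 1 / 2 ≤ α)
    (hα1 : α ≤ 1) (hζ : ∀ s : ℂ, α < s.re → riemannZeta s ≠ 0) :
    ∃ C : ℝ, 0 < C ∧ ∀ σ θ x h : ℝ, α < σ → σ ≤ 1 → 0 < θ → θ ≤ 1 → 0 < h → h ≤ x →
      ‖∫ t : ℝ, 2 * ((zetaLogDeriv (σ + t * I)).re : ℂ) * rieszQuotient x h (σ + t * I)‖ ≤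
        C * (2 * x) ^ σ * (x / h) ^ θ / θ ^ 2 := by
  obtain ⟨C, hC, hmean⟩ := exists_integral_abs_re_zetaLogDeriv_mul_bracketDecay_le hα hα1 hζ
  refine ⟨16 * C, by positivity, fun σ θ x h hσ hσ1 hθ hθ1 hh hhx => ?_⟩
  have hx : 0 < x := hh.trans_le hhx
  have hkernel : ∀ t : ℝ, ‖rieszQuotient x h (σ + t * I)‖ ≤
      8 * (2 * x) ^ σ * (x / h) ^ θ * bracketDecay (1 + θ) t := fun t => by
    simpa using norm_rieszQuotient_le (s := σ + t * I) hh hhx hθ.le hθ1 (by simp; linarith)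
  calc _ ≤ ∫ t : ℝ, 16 * (2 * x) ^ σ * (x / h) ^ θ *
          (|(zetaLogDeriv (σ + t * I)).re| * bracketDecay (1 + θ) t) := by
        refine norm_integral_le_of_norm_le
          ((integrable_abs_re_zetaLogDeriv_mul_bracketDecay hα hζ hσ (by linarith)
            (by linarith) (by linarith)).const_mul _) (.of_forall fun t => ?_)
        rw [norm_mul, norm_mul, norm_real, Real.norm_eq_abs, Complex.norm_ofNat]
        refine (mul_le_mul_of_nonneg_left (hkernel t) (by positivity)).trans_eq ?_
        ring
    _ ≤ 16 * (2 * x) ^ σ * (x / h) ^ θ * (C / θ ^ 2) := by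
        rw [integral_const_mul]
        gcongr
        exact hmean θ σ hθ hθ1 hσ hσ1
    _ = 16 * C * (2 * x) ^ σ * (x / h) ^ θ / θ ^ 2 := by ring

lemma norm_rieszQuotient_le_of_mem_strip {s : ℂ} {d b : ℝ} (hh : 0 < h) (hhx : h ≤ x)
    (hx : 1 / 2 ≤ x) (hd : 0 < d) (hd1 : d ≤ 1) (hs : d ≤ s.re) (hsb : s.re ≤ b) :
    ‖rieszQuotient x h s‖ ≤ 2 * (2 * x) ^ (b + 1) / (d * h) * bracketDecay 2 s.im := by
  refine (norm_rieszQuotient_le_bracketDecay_two hh hhx hd hd1 hs).trans ?_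
  have := bracketDecay_pos 2 s.im
  gcongr
  linarith

lemma norm_rieszQuotient_reflect_le {s : ℂ} (hh : 0 < h) (hhx : h ≤ x) (hx : 1 / 2 ≤ x)
    (hσ : 1 / 2 < σ) (hσ1 : σ ≤ 1) (hs : σ ≤ s.re) (hs1 : s.re ≤ 1) :
    ‖rieszQuotient x h (2 * σ - s)‖ ≤
      2 * (2 * x) ^ (σ + 1) / ((2 * σ - 1) * h) * bracketDecay 2 s.im := by
  have hre : (2 * σ - s).re = 2 * σ - s.re := by simp
  have him : (2 * σ - s).im = -s.im := by simp
  simpa only [him, bracketDecay_neg] using norm_rieszQuotient_le_of_mem_strip (s := 2 * σ - s)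
    (d := 2 * σ - 1) (b := σ) hh hhx hx (by linarith) (by linarith) (by linarith) (by linarith)

lemma exists_norm_integral_zetaLogDeriv_mul_rieszQuotient_reflect_le (hα : 1 / 2 ≤ α)
    (hα1 : α < 1) (hζ : ∀ s : ℂ, α < s.re → riemannZeta s ≠ 0) :
    ∃ C : ℝ, 0 < C ∧ ∀ σ x h : ℝ, α < σ → σ ≤ 1 → 1 / 2 ≤ x → 0 < h → h ≤ x →
      ‖∫ t : ℝ, zetaLogDeriv (σ + t * I) * rieszQuotient x h (2 * σ - (σ + t * I))‖ ≤
        C * (2 * x) ^ (2 * σ) / ((2 * σ - 1) * h) := by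
  obtain ⟨C, hC, hG⟩ := exists_norm_zetaLogDeriv_le hα hζ (sub_pos.mpr hα1) (by linarith)
  refine ⟨48 * C, by positivity, fun σ x h hσ hσ1 hx hh hhx => ?_⟩
  have hσ0 : 0 < 2 * σ - 1 := by linarith
  rw [integral_zetaLogDeriv_mul_eq hα hζ hσ hσ1 one_le_two one_lt_two
    (K := fun s => rieszQuotient x h (2 * σ - s))
    (fun s _ hs1 => DifferentiableAt.comp s
      (differentiableAt_rieszQuotient (by linarith) hh (by simp; linarith)) (by fun_prop))
    fun s hs hs1 => norm_rieszQuotient_reflect_le hh hhx hx (by linarith) hσ1 hs hs1]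
  have hkernel : ∀ t : ℝ, ‖rieszQuotient x h (2 * σ - ((1 : ℝ) + t * I))‖ ≤
      2 * (2 * x) ^ (2 * σ) / ((2 * σ - 1) * h) * bracketDecay 2 t := fun t => by
    have hre : (2 * σ - ((1 : ℝ) + t * I)).re = 2 * σ - 1 := by simp
    have him : (2 * σ - ((1 : ℝ) + t * I)).im = -t := by simp
    simpa only [hre, him, bracketDecay_neg, sub_add_cancel] using
      norm_rieszQuotient_le_bracketDecay_two (s := 2 * σ - ((1 : ℝ) + t * I)) hh hhx hσ0
        (by linarith) hre.ge
  calc _ ≤ ∫ t : ℝ, C * (2 * (2 * x) ^ (2 * σ) / ((2 * σ - 1) * h)) *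
          (logHeight t * bracketDecay 2 t) := by
        refine norm_integral_le_of_norm_le
          ((integrable_logHeight_mul_bracketDecay one_lt_two).const_mul _)
          (.of_forall fun t => ?_)
        have hGt : ‖zetaLogDeriv ((1 : ℝ) + t * I)‖ ≤ C * logHeight t := by
          simpa using hG ((1 : ℝ) + t * I) (by simp) (by simp)
        rw [norm_mul, mul_mul_mul_comm]
        exact mul_le_mul hGt (hkernel t) (norm_nonneg _) ((norm_nonneg _).trans hGt)
    _ ≤ C * (2 * (2 * x) ^ (2 * σ) / ((2 * σ - 1) * h)) * 24 := by
        rw [integral_const_mul]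
        gcongr
        simpa [one_add_one_eq_two] using integral_logHeight_mul_bracketDecay_le one_pos le_rfl
    _ = 48 * C * (2 * x) ^ (2 * σ) / ((2 * σ - 1) * h) := by ring

lemma exists_norm_integral_zetaLogDeriv_mul_rieszQuotient_le (hα : 1 / 2 ≤ α) (hα1 : α < 1)
    (hζ : ∀ s : ℂ, α < s.re → riemannZeta s ≠ 0) :
    ∃ C : ℝ, 0 < C ∧ ∀ σ θ x h : ℝ, α < σ → σ ≤ 1 → 0 < θ → θ ≤ 1 → 1 / 2 ≤ x → 0 < h → h ≤ x →
      ‖∫ t : ℝ, zetaLogDeriv ((2 : ℝ) + t * I) * rieszQuotient x h ((2 : ℝ) + t * I)‖ ≤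
        C * ((2 * x) ^ σ * (x / h) ^ θ / θ ^ 2 + (2 * x) ^ (2 * σ) / ((2 * σ - 1) * h)) := by
  obtain ⟨A, hA, hmain⟩ :=
    exists_norm_integral_two_mul_re_zetaLogDeriv_mul_rieszQuotient_le hα hα1.le hζ
  obtain ⟨B, hB, hreflect⟩ :=
    exists_norm_integral_zetaLogDeriv_mul_rieszQuotient_reflect_le hα hα1 hζ
  refine ⟨A + B, by positivity, fun σ θ x h hσ hσ1 hθ hθ1 hx hh hhx => ?_⟩
  have hx0 : 0 < x := by linarith
  have hσ0 : 0 < 2 * σ - 1 := by linarith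
  have hdiff : ∀ s : ℂ, σ ≤ s.re → DifferentiableAt ℂ (rieszQuotient x h) s := fun s hs =>
    differentiableAt_rieszQuotient hx0 hh (by linarith)
  have hle : ∀ s : ℂ, σ ≤ s.re → s.re ≤ 2 → ‖rieszQuotient x h s‖ ≤ _ := fun s hs hs2 =>
    norm_rieszQuotient_le_of_mem_strip hh hhx hx (by linarith) hσ1 hs hs2
  have hreflect_eq : ∀ t : ℝ, rieszQuotient x h (2 * σ - (σ + t * I)) =
      starRingEnd ℂ (rieszQuotient x h (σ + t * I)) := fun t => by
    rw [← rieszQuotient_conj hx0.le hh.le, map_add, map_mul, conj_ofReal, conj_ofReal, conj_I]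
    ring_nf
  have hint := integrable_zetaLogDeriv_mul hα hζ hσ (by linarith) one_lt_two
    (fun s hs => (hdiff s hs.ge).continuousAt) fun s hs => hle s hs.ge (by linarith)
  have hint_reflect := integrable_zetaLogDeriv_mul hα hζ hσ (by linarith) one_lt_two
    (K := fun s => rieszQuotient x h (2 * σ - s))
    (fun s hs => ContinuousAt.comp (hdiff _ (by simp [hs]; linarith)).continuousAt (by fun_prop))
    fun s hs => norm_rieszQuotient_reflect_le hh hhx hx (by linarith) hσ1 hs.ge (by linarith)
  rw [← integral_zetaLogDeriv_mul_eq hα hζ hσ (by linarith) le_rfl one_lt_two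
    (fun s hs _ => hdiff s hs) hle]
  have hB' := hreflect σ x h hσ hσ1 hx hh hhx
  simp only [hreflect_eq] at hint_reflect hB'
  rw [integral_mul_eq_integral_two_mul_re_mul_sub hint hint_reflect]
  refine (norm_sub_le _ _).trans ?_
  rw [norm_conj]
  refine (add_le_add (hmain σ θ x h hσ hσ1 hθ hθ1 hh hhx) hB').trans ?_
  have h1 : 0 ≤ (2 * x) ^ σ * (x / h) ^ θ / θ ^ 2 := by positivity
  have h2 : 0 ≤ (2 * x) ^ (2 * σ) / ((2 * σ - 1) * h) := by positivity
  calc _ = A * ((2 * x) ^ σ * (x / h) ^ θ / θ ^ 2) +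
          B * ((2 * x) ^ (2 * σ) / ((2 * σ - 1) * h)) := by ring
    _ ≤ _ := by nlinarith [mul_nonneg hA.le h2, mul_nonneg hB.le h1]

lemma rpow_div_log (hx : 1 < x) (κ : ℝ) : x ^ (κ / Real.log x) = Real.exp κ := by
  rw [Real.rpow_def_of_pos (by linarith), mul_div_cancel₀ κ (Real.log_pos hx).ne']

lemma half_le_log (hx : 2 ≤ x) : 1 / 2 ≤ Real.log x := by
  linarith [Real.log_two_gt_d9, Real.log_le_log two_pos hx]

lemma rpow_div_log_le_two {κ : ℝ} (hx : 1 < x) (hκ : 0 ≤ κ) (hκ2 : κ ≤ 1 / 2) :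
    x ^ (κ / Real.log x) ≤ 2 := by
  rw [rpow_div_log hx]
  refine (Real.exp_bound_div_one_sub_of_interval hκ (by linarith)).trans ?_
  rw [div_le_iff₀ (by linarith)]
  linarith

lemma two_mul_rpow_add_le {a b : ℝ} (hx : 0 < x) (hab : a + b ≤ 1) (hb : x ^ b ≤ 2) :
    (2 * x) ^ (a + b) ≤ 4 * x ^ a := by
  rw [Real.mul_rpow zero_le_two hx.le, Real.rpow_add hx]
  calc 2 ^ (a + b) * (x ^ a * x ^ b) ≤ 2 * (x ^ a * 2) := by
        gcongr
        exact Real.rpow_le_self_of_one_le one_le_two hab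
    _ = 4 * x ^ a := by ring

lemma two_mul_rpow_shift_le {δ : ℝ} (hα : 1 / 2 ≤ α) (hδ : 0 < δ) (hαδ : α + δ ≤ 1) (hx : 1 ≤ x)
    (hxδ : x ^ δ ≤ 2) (hxh : x ^ α ≤ 2 * h) :
    (2 * x) ^ (α + δ) * (x / h) ^ δ / δ ^ 2 + (2 * x) ^ (2 * (α + δ)) / ((2 * (α + δ) - 1) * h) ≤
      (16 / δ ^ 2 + 16 / δ) * x ^ α := by
  have hx0 : 0 < x := by linarith
  have hone : 1 ≤ x ^ α := Real.one_le_rpow hx (by linarith)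
  have hh : 0 < h := by linarith
  have hscale : (2 * x) ^ (α + δ) ≤ 4 * x ^ α := two_mul_rpow_add_le hx0 hαδ hxδ
  have hratio : (x / h) ^ δ ≤ 4 := by
    calc (x / h) ^ δ ≤ (2 * x) ^ δ := by
          gcongr
          rw [div_le_iff₀ hh]
          nlinarith
      _ ≤ 4 := by simpa using two_mul_rpow_add_le (a := 0) hx0 (by linarith) hxδ
  calc _ ≤ 4 * x ^ α * 4 / δ ^ 2 + (4 * x ^ α) ^ 2 / (2 * δ * (x ^ α / 2)) := by
        rw [mul_comm 2 (α + δ), Real.rpow_mul (by positivity), Real.rpow_two]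
        gcongr <;> linarith
    _ = _ := by
        field_simp
        ring

/-- The line of integration is moved to distance of order `1 / log x` from the line `Re s = α`. -/
lemma exists_norm_integral_zetaLogDeriv_mul_rieszQuotient_le_log_sq (hα : 1 / 2 ≤ α) (hα1 : α < 1)
    (hζ : ∀ s : ℂ, α < s.re → riemannZeta s ≠ 0) :
    ∃ C : ℝ, 0 < C ∧ ∀ x h : ℝ, 2 ≤ x → x ^ α ≤ 2 * h → h ≤ x →
      ‖∫ t : ℝ, zetaLogDeriv ((2 : ℝ) + t * I) * rieszQuotient x h ((2 : ℝ) + t * I)‖ ≤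
        C * x ^ α * Real.log x ^ 2 := by
  obtain ⟨C, hC, hshift⟩ := exists_norm_integral_zetaLogDeriv_mul_rieszQuotient_le hα hα1 hζ
  set κ := (1 - α) / 4 with hκ_def
  have hκ : 0 < κ := by linarith
  refine ⟨C * (16 / κ ^ 2 + 32 / κ), by positivity, fun x h hx hxh hhx => ?_⟩
  have hlog := half_le_log hx
  have hlog0 : 0 < Real.log x := by linarith
  set δ := κ / Real.log x with hδ_def
  have hδ : 0 < δ := by positivity
  have hδκ : δ ≤ 2 * κ := by
    rw [div_le_iff₀ hlog0]
    nlinarith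
  have hh : 0 < h := by linarith [Real.rpow_pos_of_pos (by linarith : 0 < x) α]
  have hxδ : x ^ δ ≤ 2 := rpow_div_log_le_two (by linarith) hκ.le (by linarith)
  calc _ ≤ C * ((2 * x) ^ (α + δ) * (x / h) ^ δ / δ ^ 2 +
          (2 * x) ^ (2 * (α + δ)) / ((2 * (α + δ) - 1) * h)) :=
        hshift (α + δ) δ x h (by linarith) (by linarith) hδ (by linarith) (by linarith) hh hhx
    _ ≤ C * ((16 / δ ^ 2 + 16 / δ) * x ^ α) := by
        gcongr
        exact two_mul_rpow_shift_le hα hδ (by linarith) (by linarith) hxδ hxh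
    _ = C * (16 / κ ^ 2 * Real.log x ^ 2 + 16 / κ * Real.log x) * x ^ α := by
        rw [hδ_def]
        field_simp
    _ ≤ C * (16 / κ ^ 2 * Real.log x ^ 2 + 16 / κ * (2 * Real.log x ^ 2)) * x ^ α := by
        gcongr
        nlinarith
    _ = _ := by ring

end MainIntegral

section Perron

variable {φ : ℝ → ℂ} {X σ : ℝ} {s : ℂ}

lemma hasMellin_congr {f g : ℝ → ℂ} {m : ℂ} (hf : HasMellin f s m)
    (h : ∀ y : ℝ, 0 < y → f y = g y) : HasMellin g s m := by
  have hcongr : EqOn (fun y : ℝ => (y : ℂ) ^ (s - 1) • f y)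
      (fun y : ℝ => (y : ℂ) ^ (s - 1) • g y) (Ioi 0) :=
    fun y hy => by simp only [h y hy]
  exact ⟨hf.1.congr_fun hcongr measurableSet_Ioi,
    (setIntegral_congr_fun measurableSet_Ioi hcongr).symm.trans hf.2⟩

lemma hasMellin_max_one_sub (hs : 0 < s.re) :
    HasMellin (fun y : ℝ => ((max (1 - y) 0 : ℝ) : ℂ)) s (1 / (s * (s + 1))) := by
  have hone := hasMellin_one_Ioc hs
  have hid := hasMellin_cpow_Ioc 1 (s := s) (by rw [one_re]; linarith)
  have hsub := hasMellin_sub hone.1 hid.1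
  have hs0 : s ≠ 0 := ne_of_apply_ne re hs.ne'
  have hs1 : s + 1 ≠ 0 := ne_of_apply_ne re (by simp only [add_re, one_re, zero_re]; linarith)
  have hvalue : 1 / s - 1 / (s + 1) = 1 / (s * (s + 1)) := by
    field_simp
    ring
  rw [hone.2, hid.2, hvalue] at hsub
  refine hasMellin_congr hsub fun y hy => ?_
  rcases le_or_gt y 1 with hy1 | hy1
  · rw [max_eq_left (by linarith)]
    simp [hy, hy1]
  · rw [max_eq_right (by linarith)]
    simp [hy1]

lemma hasMellin_max_one_sub_sq_div (hs : 1 < s.re) :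
    HasMellin (fun y : ℝ => ((max (1 - y) 0 ^ 2 / (2 * y) : ℝ) : ℂ)) s
      (1 / (s * (s + 1) * (s - 1))) := by
  have hinv := hasMellin_cpow_Ioc (-1) (s := s) (by simpa using hs)
  have hinv2 := hasMellin_const_smul hinv.1 (1 / 2 : ℂ)
  have hone := hasMellin_one_Ioc (s := s) (by linarith)
  have hid := hasMellin_cpow_Ioc 1 (s := s) (by rw [one_re]; linarith)
  have hid2 := hasMellin_const_smul hid.1 (1 / 2 : ℂ)
  have hsub := hasMellin_sub hinv2.1 hone.1
  have hadd := hasMellin_add hsub.1 hid2.1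
  have hs0 : s ≠ 0 := ne_of_apply_ne re (by rw [zero_re]; linarith)
  have hs1 : s + 1 ≠ 0 := ne_of_apply_ne re (by simp only [add_re, one_re, zero_re]; linarith)
  have hs2 : s - 1 ≠ 0 := ne_of_apply_ne re (by simp only [sub_re, one_re, zero_re]; linarith)
  have hvalue : (1 / 2 : ℂ) * (1 / (s - 1)) - 1 / s + 1 / 2 * (1 / (s + 1)) =
      1 / (s * (s + 1) * (s - 1)) := by
    field_simp
    ring
  rw [hsub.2, hinv2.2, hid2.2, hinv.2, hone.2, hid.2, smul_eq_mul, smul_eq_mul, ← sub_eq_add_neg,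
    hvalue] at hadd
  refine hasMellin_congr hadd fun y hy => ?_
  rcases le_or_gt y 1 with hy1 | hy1
  · have : (y : ℂ) ≠ 0 := ofReal_ne_zero.mpr hy.ne'
    rw [max_eq_left (by linarith)]
    simp only [indicator_of_mem (mem_Ioc.mpr ⟨hy, hy1⟩), smul_eq_mul, cpow_one, cpow_neg_one]
    push_cast
    field_simp
    ring
  · rw [max_eq_right (by linarith)]
    simp [hy1]

lemma integral_cpow_add_one_mul_eq {m : ℂ → ℂ} (hX : 0 < X)
    (hm : ∀ s : ℂ, s.re = σ → HasMellin φ s (m s))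
    (hint : Integrable fun t : ℝ => m (σ + t * I)) (hc : ContinuousAt φ X⁻¹) :
    ∫ t : ℝ, (X : ℂ) ^ ((σ : ℂ) + t * I + 1) * m (σ + t * I) =
      2 * Real.pi * X * φ X⁻¹ := by
  have hline : ∀ t : ℝ, mellin φ (σ + t * I) = m (σ + t * I) := fun t => (hm _ (by simp)).2
  have hvert : VerticalIntegrable (mellin φ) σ := by
    simpa only [VerticalIntegrable, hline] using hint
  have hinversion := mellinInv_mellin_eq σ φ (inv_pos.mpr hX) (hm σ (ofReal_re σ)).1 hvert hc
  simp only [mellinInv, hline, smul_eq_mul, real_smul] at hinversion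
  have harg : (X : ℂ).arg ≠ Real.pi := by
    rw [arg_ofReal_of_nonneg hX.le]
    exact Real.pi_pos.ne
  have hcpow : ∀ s : ℂ, (X : ℂ) ^ (s + 1) = X * ((X⁻¹ : ℝ) : ℂ) ^ (-s) := fun s => by
    rw [ofReal_inv, inv_cpow _ _ harg, cpow_neg, inv_inv,
      cpow_add _ _ (ofReal_ne_zero.mpr hX.ne'), cpow_one, mul_comm]
  simp only [hcpow, mul_assoc]
  rw [integral_const_mul, ← hinversion]
  generalize (∫ t : ℝ, ((X⁻¹ : ℝ) : ℂ) ^ (-((σ : ℂ) + t * I)) * m (σ + t * I)) = J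
  have : (Real.pi : ℂ) ≠ 0 := ofReal_ne_zero.mpr Real.pi_ne_zero
  push_cast
  field_simp

lemma integrable_rieszKernel (hX : 0 < X) (hσ : 0 < σ) :
    Integrable fun t : ℝ => rieszKernel X (σ + t * I) := by
  refine integrable_vertical (H := rieszKernel X)
    ((integrable_bracketDecay one_lt_two).const_mul (X ^ (σ + 1) / min σ 1))
    (fun s hs => (differentiableAt_rieszKernel hX (hs ▸ hσ)).continuousAt) fun s hs => ?_
  subst hs
  exact norm_rieszKernel_le hX (lt_min hσ one_pos) (min_le_right _ _) (min_le_left _ _)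

lemma integral_rieszKernel (hX : 0 < X) (hσ : 0 < σ) :
    ∫ t : ℝ, rieszKernel X (σ + t * I) = ((2 * Real.pi * max (X - 1) 0 : ℝ) : ℂ) := by
  have hint := integrable_rieszKernel one_pos hσ
  simp only [rieszKernel, ofReal_one, one_cpow] at hint
  simp only [rieszKernel, div_eq_mul_one_div ((X : ℂ) ^ (_ : ℂ))]
  rw [integral_cpow_add_one_mul_eq (m := fun s => 1 / (s * (s + 1))) hX
    (fun s hs => hasMellin_max_one_sub (hs ▸ hσ)) hint (by fun_prop)]
  have hscale : max (X - 1) 0 = X * max (1 - X⁻¹) 0 := by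
    rw [mul_max_of_nonneg _ _ hX.le, mul_sub, mul_one, mul_inv_cancel₀ hX.ne', mul_zero]
  rw [hscale]
  push_cast
  ring

lemma integrable_rieszKernel_div_sub_one (hX : 0 < X) (hσ : 1 < σ) :
    Integrable fun t : ℝ => rieszKernel X (σ + t * I) / (σ + t * I - 1) := by
  refine integrable_vertical (H := fun s => rieszKernel X s / (s - 1))
    ((integrable_bracketDecay one_lt_two).const_mul (X ^ (σ + 1) / 1 / (σ - 1)))
    (fun s hs => ?_) fun s hs => ?_
  · exact ((differentiableAt_rieszKernel hX (by linarith)).div (by fun_prop)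
      (ne_of_apply_ne re (by simp only [sub_re, one_re, zero_re]; linarith))).continuousAt
  · subst hs
    rw [norm_div, mul_comm, mul_div_assoc', mul_comm]
    have hre : s.re - 1 ≤ ‖s - 1‖ := by simpa using re_le_norm (s - 1)
    exact div_le_div₀ (mul_nonneg (by positivity) (bracketDecay_pos _ _).le)
      (norm_rieszKernel_le hX one_pos le_rfl hσ.le) (by linarith) hre

lemma integral_rieszKernel_div_sub_one (hX : 1 ≤ X) (hσ : 1 < σ) :
    ∫ t : ℝ, rieszKernel X (σ + t * I) / (σ + t * I - 1) =
      ((Real.pi * (X - 1) ^ 2 : ℝ) : ℂ) := by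
  have hX0 : 0 < X := by linarith
  have hint := integrable_rieszKernel_div_sub_one one_pos hσ
  simp only [rieszKernel, ofReal_one, one_cpow, div_div] at hint
  simp only [rieszKernel, div_div]
  simp only [div_eq_mul_one_div ((X : ℂ) ^ (_ : ℂ))]
  rw [integral_cpow_add_one_mul_eq (m := fun s => 1 / (s * (s + 1) * (s - 1))) hX0
    (fun s hs => hasMellin_max_one_sub_sq_div (hs ▸ hσ)) hint (by fun_prop (disch := positivity))]
  rw [max_eq_left (sub_nonneg.mpr (inv_le_one_of_one_le₀ hX))]
  have : (X : ℂ) ≠ 0 := ofReal_ne_zero.mpr hX0.ne'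
  push_cast
  field_simp

lemma term_mul_rieszKernel (f : ℕ → ℂ) (hX : 0 ≤ X) {n : ℕ} (hn : n ≠ 0) (s : ℂ) :
    LSeries.term f s n * rieszKernel X s = f n * n * rieszKernel (X / n) s := by
  have hn0 : (n : ℂ) ≠ 0 := Nat.cast_ne_zero.mpr hn
  have hdiv : ((X / n : ℝ) : ℂ) ^ (s + 1) = (X : ℂ) ^ (s + 1) / ((n : ℂ) ^ s * n) := by
    rw [ofReal_div, ← ofReal_natCast n, div_cpow_ofReal_nonneg hX n.cast_nonneg, ofReal_natCast,
      cpow_add _ _ hn0, cpow_one]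
  have : (n : ℂ) ^ s ≠ 0 := by simp [cpow_eq_zero_iff, hn0]
  rw [LSeries.term_of_ne_zero hn, rieszKernel, rieszKernel, hdiv]
  field_simp

lemma integrable_term_mul_rieszKernel (f : ℕ → ℂ) (hX : 0 < X) (hσ : 0 < σ) (n : ℕ) :
    Integrable fun t : ℝ =>
      LSeries.term f (σ + t * I) n * rieszKernel X (σ + t * I) := by
  rcases eq_or_ne n 0 with rfl | hn
  · simp
  · simp only [term_mul_rieszKernel f hX.le hn]
    exact (integrable_rieszKernel (by positivity) hσ).const_mul _

lemma integral_term_mul_rieszKernel (f : ℕ → ℂ) (hX : 0 < X) (hσ : 0 < σ) {n : ℕ} (hn : n ≠ 0) :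
    ∫ t : ℝ, LSeries.term f (σ + t * I) n * rieszKernel X (σ + t * I) =
      2 * Real.pi * (f n * (max (X - n) 0 : ℝ)) := by
  have hn0 : (0 : ℝ) < n := by positivity
  have hscale : max (X - n) 0 = n * max (X / n - 1) 0 := by
    rw [mul_max_of_nonneg _ _ hn0.le, mul_sub, mul_one, mul_zero, mul_div_cancel₀ _ hn0.ne']
  simp only [term_mul_rieszKernel f hX.le hn]
  rw [integral_const_mul, integral_rieszKernel (by positivity) hσ, hscale]
  push_cast
  ring

lemma integral_LSeries_mul_rieszKernel {f : ℕ → ℂ} (hX : 0 < X) (hσ : 0 < σ)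
    (hf : LSeriesSummable f σ) :
    ∫ t : ℝ, LSeries f (σ + t * I) * rieszKernel X (σ + t * I) =
      2 * Real.pi * ∑ n ∈ Finset.Ioc 0 ⌊X⌋₊, f n * (X - n) := by
  have hnorm : ∀ (n : ℕ) (t : ℝ), ‖LSeries.term f (σ + t * I) n * rieszKernel X (σ + t * I)‖ =
      ‖LSeries.term f σ n‖ * ‖rieszKernel X (σ + t * I)‖ := fun n t => by
    rw [norm_mul, LSeries.norm_term_eq, LSeries.norm_term_eq]
    simp
  have hsummable : Summable fun n => ∫ t : ℝ,
      ‖LSeries.term f (σ + t * I) n * rieszKernel X (σ + t * I)‖ := by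
    simp only [hnorm, integral_const_mul]
    exact hf.norm.mul_right _
  have hzero : ∀ n ∉ Finset.Ioc 0 ⌊X⌋₊,
      ∫ t : ℝ, LSeries.term f (σ + t * I) n * rieszKernel X (σ + t * I) = 0 := fun n hn => by
    rcases eq_or_ne n 0 with rfl | hn0
    · simp
    · have hnX : X < n :=
        (Nat.floor_lt hX.le).mp (by simpa [Nat.pos_of_ne_zero hn0] using hn)
      rw [integral_term_mul_rieszKernel f hX hσ hn0, max_eq_right (by linarith)]
      simp
  calc _ = ∫ t : ℝ, ∑' n, LSeries.term f (σ + t * I) n * rieszKernel X (σ + t * I) := by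
        simp only [LSeries, tsum_mul_right]
    _ = ∑' n, ∫ t : ℝ, LSeries.term f (σ + t * I) n * rieszKernel X (σ + t * I) :=
        (hasSum_integral_of_summable_integral_norm (integrable_term_mul_rieszKernel f hX hσ)
          hsummable).tsum_eq.symm
    _ = ∑ n ∈ Finset.Ioc 0 ⌊X⌋₊, 2 * Real.pi * (f n * (X - n)) := by
        rw [tsum_eq_sum hzero]
        refine Finset.sum_congr rfl fun n hn => ?_
        obtain ⟨hn0, hnX⟩ := Finset.mem_Ioc.mp hn
        have hnX' : (n : ℝ) ≤ X := (Nat.le_floor_iff hX.le).mp hnX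
        rw [integral_term_mul_rieszKernel f hX hσ hn0.ne', max_eq_left (by linarith), ofReal_sub,
          ofReal_natCast]
    _ = _ := by rw [Finset.mul_sum]

lemma integrable_zetaLogDeriv_mul_rieszKernel (hX : 0 < X) (hσ : 1 < σ) (hσ2 : σ ≤ 2) :
    Integrable fun t : ℝ => zetaLogDeriv (σ + t * I) * rieszKernel X (σ + t * I) :=
  integrable_zetaLogDeriv_mul (by norm_num) (fun _ => riemannZeta_ne_zero_of_one_lt_re) hσ hσ2
    one_lt_two (fun _ hs => (differentiableAt_rieszKernel hX (by linarith)).continuousAt)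
    (M := X ^ (σ + 1) / 1) fun s hs => by
      simpa only [hs] using norm_rieszKernel_le (s := s) hX one_pos le_rfl (by linarith)

lemma integral_zetaLogDeriv_mul_rieszKernel (hX : 1 ≤ X) (hσ : 1 < σ) (hσ2 : σ ≤ 2) :
    ∫ t : ℝ, zetaLogDeriv (σ + t * I) * rieszKernel X (σ + t * I) =
      ((Real.pi * (X - 1) ^ 2 - 2 * Real.pi *
        ∑ n ∈ Finset.Ioc 0 ⌊X⌋₊, ArithmeticFunction.vonMangoldt n * (X - n) : ℝ) : ℂ) := by
  have hX0 : 0 < X := by linarith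
  have hpole := integrable_rieszKernel_div_sub_one hX0 hσ
  have hG := integrable_zetaLogDeriv_mul_rieszKernel hX0 hσ hσ2
  have hsplit : ∀ t : ℝ,
      LSeries (fun n => (ArithmeticFunction.vonMangoldt n : ℂ)) (σ + t * I) *
        rieszKernel X (σ + t * I) =
      rieszKernel X (σ + t * I) / (σ + t * I - 1) -
        zetaLogDeriv (σ + t * I) * rieszKernel X (σ + t * I) := fun t => by
    rw [zetaLogDeriv_eq_sub_LSeries (by simpa using hσ)]
    ring
  have hperron := integral_LSeries_mul_rieszKernel hX0 (by linarith)
    (ArithmeticFunction.LSeriesSummable_vonMangoldt (s := σ) (by simpa using hσ))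
  simp only [hsplit] at hperron
  rw [integral_sub hpole hG, integral_rieszKernel_div_sub_one hX hσ, sub_eq_iff_eq_add] at hperron
  push_cast at hperron ⊢
  linear_combination -hperron

end Perron

section PrimeCounting

variable {α x h : ℝ}

/-- The first Riesz mean `∑_{n ≤ x} Λ(n) (x - n)` of the von Mangoldt function; it is the
integral of `ψ` from `0` to `x`. -/
noncomputable def psiRiesz (x : ℝ) : ℝ :=
  ∑ n ∈ Finset.Ioc 0 ⌊x⌋₊, ArithmeticFunction.vonMangoldt n * (x - n)

lemma psiRiesz_sub_bounds (hx : 0 ≤ x) (hh : 0 ≤ h) :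
    h * Chebyshev.psi x ≤ psiRiesz (x + h) - psiRiesz x ∧
      psiRiesz (x + h) - psiRiesz x ≤ h * Chebyshev.psi (x + h) := by
  have hfloor : ⌊x⌋₊ ≤ ⌊x + h⌋₊ := Nat.floor_mono (by linarith)
  set tail := ∑ n ∈ Finset.Ioc ⌊x⌋₊ ⌊x + h⌋₊, ArithmeticFunction.vonMangoldt n * (x + h - n)
  have hsub : psiRiesz (x + h) - psiRiesz x = h * Chebyshev.psi x + tail := by
    rw [psiRiesz, ← Finset.sum_Ioc_consecutive _ (Nat.zero_le _) hfloor, psiRiesz, Chebyshev.psi,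
      Finset.mul_sum, add_sub_right_comm, ← Finset.sum_sub_distrib]
    congr 1
    exact Finset.sum_congr rfl fun n _ => by ring
  have hpsi : h * Chebyshev.psi (x + h) = h * Chebyshev.psi x +
      ∑ n ∈ Finset.Ioc ⌊x⌋₊ ⌊x + h⌋₊, ArithmeticFunction.vonMangoldt n * h := by
    rw [Chebyshev.psi, Chebyshev.psi, ← Finset.sum_Ioc_consecutive _ (Nat.zero_le _) hfloor,
      mul_add, ← Finset.sum_mul, mul_comm h (∑ n ∈ Finset.Ioc ⌊x⌋₊ _, _)]
  have hmem : ∀ n ∈ Finset.Ioc ⌊x⌋₊ ⌊x + h⌋₊, x ≤ n ∧ (n : ℝ) ≤ x + h := fun n hn =>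
    have ⟨hn1, hn2⟩ := Finset.mem_Ioc.mp hn
    ⟨((Nat.floor_lt hx).mp hn1).le, (Nat.le_floor_iff (by linarith)).mp hn2⟩
  rw [hsub, hpsi]
  constructor
  · refine le_add_of_nonneg_right (Finset.sum_nonneg fun n hn => ?_)
    exact mul_nonneg ArithmeticFunction.vonMangoldt_nonneg (by linarith [hmem n hn])
  · refine add_le_add_right (Finset.sum_le_sum fun n hn => ?_) _
    exact mul_le_mul_of_nonneg_left (by linarith [hmem n hn])
      ArithmeticFunction.vonMangoldt_nonneg

lemma integral_zetaLogDeriv_mul_rieszQuotient (hx : 1 ≤ x) (hh : 0 < h) :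
    ∫ t : ℝ, zetaLogDeriv ((2 : ℝ) + t * I) * rieszQuotient x h ((2 : ℝ) + t * I) =
      ((2 * Real.pi * (x - 1 + h / 2 - (psiRiesz (x + h) - psiRiesz x) / h) : ℝ) : ℂ) := by
  have hint : ∀ X : ℝ, 1 ≤ X → Integrable fun t : ℝ =>
      zetaLogDeriv ((2 : ℝ) + t * I) * rieszKernel X ((2 : ℝ) + t * I) := fun X hX =>
    integrable_zetaLogDeriv_mul_rieszKernel (by linarith) one_lt_two le_rfl
  have hxh : 1 ≤ x + h := by linarith
  simp only [rieszQuotient, mul_div_assoc', mul_sub]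
  rw [integral_div, integral_sub (hint _ hxh) (hint x hx),
    integral_zetaLogDeriv_mul_rieszKernel hxh one_lt_two le_rfl,
    integral_zetaLogDeriv_mul_rieszKernel hx one_lt_two le_rfl, ← ofReal_sub, ← ofReal_div]
  congr 1
  simp only [psiRiesz]
  field_simp
  ring

lemma exists_abs_psiRiesz_sub_div_sub_le (hα : 1 / 2 ≤ α) (hα1 : α < 1)
    (hζ : ∀ s : ℂ, α < s.re → riemannZeta s ≠ 0) :
    ∃ C : ℝ, 0 < C ∧ ∀ x h : ℝ, 2 ≤ x → x ^ α ≤ 2 * h → h ≤ x →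
      |(psiRiesz (x + h) - psiRiesz x) / h - (x - 1 + h / 2)| ≤ C * x ^ α * Real.log x ^ 2 := by
  obtain ⟨C, hC, hbound⟩ :=
    exists_norm_integral_zetaLogDeriv_mul_rieszQuotient_le_log_sq hα hα1 hζ
  refine ⟨C, hC, fun x h hx hxh hhx => ?_⟩
  have hh : 0 < h := by linarith [Real.rpow_pos_of_pos (by linarith : 0 < x) α]
  have := hbound x h hx hxh hhx
  rw [integral_zetaLogDeriv_mul_rieszQuotient (by linarith) hh, norm_real, Real.norm_eq_abs,
    abs_mul, abs_of_pos Real.two_pi_pos] at this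
  rw [abs_sub_comm]
  exact (le_mul_of_one_le_left (abs_nonneg _) (by linarith [Real.two_le_pi])).trans this

lemma le_four_mul_mul_log_sq {a : ℝ} (ha : 0 ≤ a) (hx : 2 ≤ x) :
    a ≤ 4 * (a * Real.log x ^ 2) := by
  have hlog := half_le_log hx
  nlinarith [mul_le_mul_of_nonneg_left (by nlinarith : 1 / 4 ≤ Real.log x ^ 2) ha]

lemma exists_psi_le (hα : 1 / 2 ≤ α) (hα1 : α < 1)
    (hζ : ∀ s : ℂ, α < s.re → riemannZeta s ≠ 0) :
    ∃ C : ℝ, 0 < C ∧ ∀ x : ℝ, 2 ≤ x →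
      Chebyshev.psi x ≤ x + C * x ^ α * Real.log x ^ 2 := by
  obtain ⟨C, hC, hbound⟩ := exists_abs_psiRiesz_sub_div_sub_le hα hα1 hζ
  refine ⟨C + 1, by positivity, fun x hx => ?_⟩
  have hx0 : 0 < x := by linarith
  set h := x ^ α / 2 with h_def
  have hh : 0 < h := by positivity
  have hle : x ^ α ≤ x := Real.rpow_le_self_of_one_le (by linarith) hα1.le
  have hpsi : Chebyshev.psi x ≤ (psiRiesz (x + h) - psiRiesz x) / h :=
    (le_div_iff₀' hh).mpr (psiRiesz_sub_bounds hx0.le hh.le).1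
  have := (abs_le.mp (hbound x h hx (by linarith) (by linarith))).2
  have hh_le := le_four_mul_mul_log_sq (Real.rpow_nonneg hx0.le α) hx
  linarith

lemma exists_le_psi (hα : 1 / 2 ≤ α) (hα1 : α < 1)
    (hζ : ∀ s : ℂ, α < s.re → riemannZeta s ≠ 0) :
    ∃ C : ℝ, 0 < C ∧ ∀ x : ℝ, 2 ≤ x →
      x - C * x ^ α * Real.log x ^ 2 ≤ Chebyshev.psi x := by
  obtain ⟨C, hC, hbound⟩ := exists_abs_psiRiesz_sub_div_sub_le hα hα1 hζ
  refine ⟨C + 16, by positivity, fun x hx => ?_⟩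
  have hx0 : 0 < x := by linarith
  have hh_le := le_four_mul_mul_log_sq (Real.rpow_nonneg hx0.le α) hx
  have hone : 1 ≤ x ^ α := Real.one_le_rpow (by linarith) (by linarith)
  rcases le_total x 4 with hx4 | hx4
  · have hmain : 0 ≤ C * x ^ α * Real.log x ^ 2 := by positivity
    linarith [Chebyshev.psi_nonneg x]
  set h := x ^ α / 2 with h_def
  have hh : 0 < h := by positivity
  have hle : x ^ α ≤ x := Real.rpow_le_self_of_one_le (by linarith) hα1.le
  have hpsi : (psiRiesz x - psiRiesz (x - h)) / h ≤ Chebyshev.psi x := by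
    rw [div_le_iff₀' hh]
    simpa only [sub_add_cancel] using
      (psiRiesz_sub_bounds (by linarith : 0 ≤ x - h) hh.le).2
  have hy : (x - h) ^ α ≤ x ^ α := by
    gcongr <;> linarith
  have := (abs_le.mp (hbound (x - h) h (by linarith) (by linarith) (by linarith))).1
  rw [sub_add_cancel] at this
  have hy_le : C * (x - h) ^ α * Real.log (x - h) ^ 2 ≤ C * x ^ α * Real.log x ^ 2 := by
    have : 0 ≤ Real.log (x - h) := Real.log_nonneg (by linarith)
    gcongr <;> linarith
  linarith

lemma exists_abs_theta_sub_le (hα : 1 / 2 ≤ α) (hα1 : α < 1)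
    (hζ : ∀ s : ℂ, α < s.re → riemannZeta s ≠ 0) :
    ∃ C : ℝ, 0 < C ∧ ∀ x : ℝ, 2 ≤ x →
      |Chebyshev.theta x - x| ≤ C * x ^ α * Real.log x ^ 2 := by
  obtain ⟨A, hA, hupper⟩ := exists_psi_le hα hα1 hζ
  obtain ⟨B, hB, hlower⟩ := exists_le_psi hα hα1 hζ
  refine ⟨A + B + 4, by positivity, fun x hx => ?_⟩
  have hlog := half_le_log hx
  have hsqrt : √x ≤ x ^ α := by
    rw [Real.sqrt_eq_rpow]
    exact Real.rpow_le_rpow_of_exponent_le (by linarith) hα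
  have hdiff : |Chebyshev.psi x - Chebyshev.theta x| ≤ 4 * x ^ α * Real.log x ^ 2 :=
    calc _ ≤ 2 * √x * Real.log x :=
          Chebyshev.abs_psi_sub_theta_le_sqrt_mul_log (by linarith)
      _ ≤ 2 * x ^ α * (2 * Real.log x ^ 2) := by
          gcongr
          nlinarith
      _ = _ := by ring
  have hA0 : 0 ≤ A * x ^ α * Real.log x ^ 2 := by positivity
  have hB0 : 0 ≤ B * x ^ α * Real.log x ^ 2 := by positivity
  have hsum : (A + B + 4) * x ^ α * Real.log x ^ 2 = A * x ^ α * Real.log x ^ 2 +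
      B * x ^ α * Real.log x ^ 2 + 4 * x ^ α * Real.log x ^ 2 := by ring
  obtain ⟨h1, h2⟩ := abs_le.mp hdiff
  rw [abs_le, hsum]
  constructor <;> linarith [hupper x hx, hlower x hx]

lemma intervalIntegrable_theta_div (hx : 2 ≤ x) :
    IntervalIntegrable (fun t => Chebyshev.theta t / (t * Real.log t ^ 2)) volume 2 x :=
  (intervalIntegrable_iff_integrableOn_Icc_of_le hx).mpr
    (Chebyshev.integrableOn_theta_div_id_mul_log_sq x)

lemma intervalIntegrable_one_div_log_sq (hx : 2 ≤ x) :
    IntervalIntegrable (fun t => 1 / Real.log t ^ 2) volume 2 x :=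
  Chebyshev.intervalIntegrable_one_div_log_sq one_lt_two (by linarith)

lemma integral_one_div_log (hx : 2 ≤ x) :
    ∫ t in (2 : ℝ)..x, 1 / Real.log t =
      x / Real.log x - 2 / Real.log 2 + ∫ t in (2 : ℝ)..x, 1 / Real.log t ^ 2 := by
  have hpos : ∀ t ∈ uIcc 2 x, 0 < t ∧ 0 < Real.log t := fun t ht => by
    rw [uIcc_of_le hx] at ht
    exact ⟨by linarith [ht.1], Real.log_pos (by linarith [ht.1])⟩
  have hint : IntervalIntegrable (fun t => 1 / Real.log t) volume 2 x :=
    (continuousOn_const.div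
      (Real.continuousOn_log.mono fun t ht => (hpos t ht).1.ne')
      fun t ht => (hpos t ht).2.ne').intervalIntegrable
  have hderiv : ∀ t ∈ uIcc 2 x, HasDerivAt (fun t => t / Real.log t)
      (1 / Real.log t - 1 / Real.log t ^ 2) t := fun t ht => by
    obtain ⟨ht0, hlog⟩ := hpos t ht
    refine ((hasDerivAt_id' t).div (Real.hasDerivAt_log ht0.ne') hlog.ne').congr_deriv ?_
    field_simp
  have hparts := intervalIntegral.integral_eq_sub_of_hasDerivAt hderiv
    (hint.sub (intervalIntegrable_one_div_log_sq hx))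
  rw [intervalIntegral.integral_sub hint (intervalIntegrable_one_div_log_sq hx)] at hparts
  linarith

lemma primePi_sub_integral_one_div_log (hx : 2 ≤ x) :
    (primePi x : ℝ) - ∫ t in (2 : ℝ)..x, 1 / Real.log t =
      (Chebyshev.theta x - x) / Real.log x + 2 / Real.log 2 +
        ∫ t in (2 : ℝ)..x, (Chebyshev.theta t - t) / (t * Real.log t ^ 2) := by
  have hsplit : ∫ t in (2 : ℝ)..x, (Chebyshev.theta t - t) / (t * Real.log t ^ 2) =
      ∫ t in (2 : ℝ)..x, (Chebyshev.theta t / (t * Real.log t ^ 2) - 1 / Real.log t ^ 2) := by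
    refine intervalIntegral.integral_congr fun t ht => ?_
    rw [uIcc_of_le hx] at ht
    have ht0 : t ≠ 0 := by linarith [ht.1]
    simp only [sub_div]
    rw [div_mul_cancel_left₀ ht0, one_div]
  rw [primePi, Chebyshev.primeCounting_eq_theta_div_log_add_integral hx, integral_one_div_log hx,
    hsplit, intervalIntegral.integral_sub (intervalIntegrable_theta_div hx)
      (intervalIntegrable_one_div_log_sq hx)]
  ring

lemma abs_integral_theta_sub_div_le {C : ℝ} (hα : 0 < α) (hC : 0 ≤ C)
    (hθ : ∀ t : ℝ, 2 ≤ t → |Chebyshev.theta t - t| ≤ C * t ^ α * Real.log t ^ 2) (hx : 2 ≤ x) :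
    |∫ t in (2 : ℝ)..x, (Chebyshev.theta t - t) / (t * Real.log t ^ 2)| ≤ C / α * x ^ α := by
  have hle : ∀ t ∈ Ioc 2 x,
      ‖(Chebyshev.theta t - t) / (t * Real.log t ^ 2)‖ ≤ C * t ^ (α - 1) := fun t ht => by
    have ht0 : 0 < t := by linarith [ht.1]
    have hlog : 0 < Real.log t := Real.log_pos (by linarith [ht.1])
    rw [Real.norm_eq_abs, abs_div, abs_of_pos (by positivity : 0 < t * Real.log t ^ 2),
      div_le_iff₀ (by positivity)]
    refine (hθ t ht.1.le).trans_eq ?_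
    rw [Real.rpow_sub_one ht0.ne']
    field_simp
  calc _ ≤ ∫ t in (2 : ℝ)..x, C * t ^ (α - 1) :=
        intervalIntegral.norm_integral_le_of_norm_le hx (.of_forall hle)
          ((intervalIntegral.intervalIntegrable_rpow' (by linarith)).const_mul C)
    _ = C / α * x ^ α - C / α * 2 ^ α := by
        rw [intervalIntegral.integral_const_mul, integral_rpow (Or.inl (by linarith)),
          sub_add_cancel]
        ring
    _ ≤ C / α * x ^ α := sub_le_self _ (by positivity)

lemma abs_primePi_sub_integral_one_div_log_le {C : ℝ} (hα : 0 < α) (hC : 0 ≤ C)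
    (hθ : ∀ t : ℝ, 2 ≤ t → |Chebyshev.theta t - t| ≤ C * t ^ α * Real.log t ^ 2) (hx : 2 ≤ x) :
    |(primePi x : ℝ) - ∫ t in (2 : ℝ)..x, 1 / Real.log t| ≤
      (C + 8 + 2 * C / α) * x ^ α * Real.log x := by
  have hlog := half_le_log hx
  have hlog0 : 0 < Real.log x := by linarith
  have hone : 1 ≤ x ^ α := Real.one_le_rpow (by linarith) hα.le
  have hboundary : |(Chebyshev.theta x - x) / Real.log x| ≤ C * x ^ α * Real.log x := by
    rw [abs_div, abs_of_pos hlog0, div_le_iff₀ hlog0]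
    exact (hθ x hx).trans_eq (by ring)
  have hconst : |2 / Real.log 2| ≤ 8 * x ^ α * Real.log x := by
    have hlog2 := half_le_log le_rfl
    rw [abs_of_nonneg (by positivity)]
    calc 2 / Real.log 2 ≤ 2 / (1 / 2) := by gcongr
      _ = 8 * 1 * (1 / 2) := by norm_num
      _ ≤ 8 * x ^ α * Real.log x := by gcongr
  have hintegral : |∫ t in (2 : ℝ)..x, (Chebyshev.theta t - t) / (t * Real.log t ^ 2)| ≤
      2 * C / α * x ^ α * Real.log x := by
    calc _ ≤ C / α * x ^ α := abs_integral_theta_sub_div_le hα hC hθ hx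
      _ = 2 * C / α * x ^ α * (1 / 2) := by ring
      _ ≤ _ := by gcongr
  rw [primePi_sub_integral_one_div_log hx]
  calc _ ≤ _ := abs_add_three _ _ _
    _ ≤ C * x ^ α * Real.log x + 8 * x ^ α * Real.log x + 2 * C / α * x ^ α * Real.log x := by
        gcongr
    _ = _ := by ring

end PrimeCounting

theorem vonKoch_of_RH_general {α : ℝ} (hα : 1 / 2 ≤ α) (hα1 : α < 1)
    (hζ : ∀ s : ℂ, α < s.re → riemannZeta s ≠ 0) :
    ∃ C : ℝ, 0 < C ∧ ∀ x : ℝ, 2 ≤ x →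
      |(primePi x : ℝ) - ∫ t in (2 : ℝ)..x, 1 / Real.log t| ≤ C * x ^ α * Real.log x := by
  have hα0 : 0 < α := by linarith
  obtain ⟨C, hC, hθ⟩ := exists_abs_theta_sub_le hα hα1 hζ
  exact ⟨C + 8 + 2 * C / α, by positivity, fun x hx =>
    abs_primePi_sub_integral_one_div_log_le hα0 hC.le hθ hx⟩

lemma riemannZeta_ne_zero_of_half_lt_re
    (RH : ∀ s : ℂ, riemannZeta s = 0 → 0 < s.re → s.re < 1 → s.re = 1 / 2) {s : ℂ}
    (hs : 1 / 2 < s.re) : riemannZeta s ≠ 0 := by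
  rcases lt_or_ge s.re 1 with hs1 | hs1
  · exact fun h0 => hs.ne' (RH s h0 (by linarith) hs1)
  · exact riemannZeta_ne_zero_of_one_le_re hs1

/-- Von Koch (1901): if the Riemann hypothesis holds, then
`π(x) = Li(x) + O(√x log x)`, i.e. there is `C > 0` such that
`|π(x) - ∫_2^x dt/log t| ≤ C √x log x` for all `x ≥ 2`. -/
theorem vonKoch_of_RH
    (RH : ∀ s : ℂ, riemannZeta s = 0 → 0 < s.re → s.re < 1 → s.re = 1 / 2) :
    ∃ C : ℝ, 0 < C ∧ ∀ x : ℝ, 2 ≤ x →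
      |(primePi x : ℝ) - ∫ t in (2 : ℝ)..x, 1 / Real.log t| ≤
        C * Real.sqrt x * Real.log x := by
  simpa only [Real.sqrt_eq_rpow] using vonKoch_of_RH_general le_rfl one_half_lt_one
    fun s => riemannZeta_ne_zero_of_half_lt_re RH
end
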